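/- For every finite simple graph Γ with m ≥ 2 vertices there exist an integer n with n ≤ 2^(2^(m²)) (equivalently, log₂ log₂ n ≤ m²) and a quasi-isometric group embedding of G(Γ) into the pure braid group P_n, where both groups carry word metrics with respect to finite generating sets. -/

import Mathlib

/-!
Let `m` be the number of vertices of `Γ`. The simple paths of `Γ` (including the empty one) form a
rooted tree: the children of a path `t` are its one-vertex extensions `u :: t`, and the label of
`u :: t` is `u`. This tree is realised by a diagram of chords on a line in which the chords of two
nodes cross exactly when one node is the parent of the other (`chord_cross`, `chord_not_cross`); in a
positional system with base `2 m + 2` it needs only `2 (2 m + 2) ^ m + 1` points. A chord with ends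
`i < j` gives the full twist of the strands `i` and `j`, and the twists of non-crossing chords
commute. Nodes whose labels are equal or not adjacent in `Γ` are never parent and child, so sending a
vertex `v` to the product of the twists of all nodes with label `v` defines a homomorphism from `G(Γ)`
to the pure braid group (`exists_hom`).

Its distortion is read off from the coloured Burau representation over a field with one independent
variable `X` for each node. Give the ends of the chord of each node the colours `X⁻¹` and `X²` in its
own variable, and all other strands the colour `1`. Each twist acts as a transvection
(`R_twc_zpow`), and on the span of the transvection vectors of the nodes the image of `v ^ k` acts by
the explicit rule `step`: a coordinate at a node `s` with label `v` and variable `X` becomes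
`X ^ k x s + κ (∑ x (children of s) - x (parent of s))`, where `κ` has degree `max k 0 + 1` in `X`,
and the other coordinates do not change (`Lv_img`).

Start at the root and apply a reduced word. Let `u :: t` be a node, and consider the degrees in its
own variable. Between two consecutive syllables of `u` a reduced word contains a syllable whose label
is adjacent to `u`; by induction from the leaves downwards the pulse sent by `u :: t` to the
corresponding child comes back as a nonzero response. The response does not involve the variable of
`u :: t` and hence has degree `0`. As `κ` has larger degree than `X ^ k`, each syllable `u ^ k` raises
the degree of the coordinate at `u :: t` by exactly `max k 0 + 1` (`growth`). So the coordinate at a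
one-vertex path `[v]` has degree equal to the sum of `max k 0 + 1` over all syllables `v ^ k`
(`growth_root`). Applying this to an element and to its inverse bounds its word length in `G(Γ)`. On
the other side a braid generator changes all degrees by a bounded amount (`exists_cost`), so these
degrees are at most linear in the word length of the image. This gives the lower quasi-isometry
bound, and the coordinate at `[v]` being nonzero gives injectivity.
-/

/-! Right-angled Artin groups in the "opposite" convention:
generators are vertices, and two generators commute iff the vertices are NOT adjacent. -/

/-- The commutation relators for the right-angled Artin group (opposite convention):
one commutator for each pair of distinct non-adjacent vertices. -/
def raagRels {V : Type*} (Γ : SimpleGraph V) : Set (FreeGroup V) :=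
  {r | ∃ u v : V, u ≠ v ∧ ¬ Γ.Adj u v ∧
    r = FreeGroup.of u * FreeGroup.of v * (FreeGroup.of u)⁻¹ * (FreeGroup.of v)⁻¹}

/-- The right-angled Artin group `G(Γ)` (opposite convention). -/
abbrev Raag {V : Type*} (Γ : SimpleGraph V) : Type _ := PresentedGroup (raagRels Γ)

/-- The vertex generators of `G(Γ)`. -/
abbrev Raag.of {V : Type*} (Γ : SimpleGraph V) (v : V) : Raag Γ := PresentedGroup.of v

/-- The element of `G(Γ)` represented by a word: a list of letters, where the letter `(v, b)`
stands for `v` if `b = true` and for `v⁻¹` if `b = false`. -/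
def wordProd {V : Type*} (Γ : SimpleGraph V) (w : List (V × Bool)) : Raag Γ :=
  (w.map fun l => if l.2 then Raag.of Γ l.1 else (Raag.of Γ l.1)⁻¹).prod

/-- A word is reduced if no shorter word represents the same element of `G(Γ)`. -/
def IsReducedWord {V : Type*} (Γ : SimpleGraph V) (w : List (V × Bool)) : Prop :=
  ∀ w' : List (V × Bool), wordProd Γ w' = wordProd Γ w → w.length ≤ w'.length

/-- The word length of `g` with respect to a generating set `S` of a group:
the least length of a list of elements of `S ∪ S⁻¹` whose product is `g`. -/
noncomputable def wordLength {G : Type*} [Group G] (S : Set G) (g : G) : ℕ :=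
  sInf {n | ∃ l : List G, (∀ x ∈ l, x ∈ S ∨ x⁻¹ ∈ S) ∧ l.prod = g ∧ l.length = n}

/-- The (right-invariant) word metric associated to a generating set. -/
noncomputable def wordDist {G : Type*} [Group G] (S : Set G) (x y : G) : ℝ :=
  (wordLength S (y * x⁻¹) : ℝ)

/-- Word length in `G(Γ)` with respect to the vertex generating set. -/
noncomputable def raagNorm {V : Type*} (Γ : SimpleGraph V) (g : Raag Γ) : ℕ :=
  wordLength (Set.range (Raag.of Γ)) g

/-- The word metric on `G(Γ)` with respect to the vertex generating set. -/
noncomputable def raagDist {V : Type*} (Γ : SimpleGraph V) (x y : Raag Γ) : ℝ :=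
  wordDist (Set.range (Raag.of Γ)) x y

/-- A quasi-isometric group embedding: an injective group homomorphism which
is a quasi-isometric embedding with respect to the given metrics. -/
def IsQIEmbedding {G H : Type*} [Group G] [Group H] (f : G →* H)
    (dG : G → G → ℝ) (dH : H → H → ℝ) : Prop :=
  Function.Injective f ∧ ∃ C : ℝ, 1 ≤ C ∧ ∀ x y : G,
    dG x y / C - C ≤ dH (f x) (f y) ∧ dH (f x) (f y) ≤ C * dG x y + C

/-- The support of `g ∈ G(Γ)`: vertices occurring in some reduced word representing `g`. -/
def raagSupp {V : Type*} (Γ : SimpleGraph V) (g : Raag Γ) : Set V :=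
  {v | ∃ w : List (V × Bool), IsReducedWord Γ w ∧ wordProd Γ w = g ∧ ∃ b, (v, b) ∈ w}

/-- A cancellation of the vertex `v` in the word `w`: a subword `v^{±1} w' v^{∓1}` where the
support of the element represented by `w'` is disjoint from the link of `v`. -/
def HasCancellationOf {V : Type*} (Γ : SimpleGraph V) (w : List (V × Bool)) (v : V) : Prop :=
  ∃ (w₁ w' w₂ : List (V × Bool)) (b : Bool),
    w = w₁ ++ (v, b) :: (w' ++ (v, !b) :: w₂) ∧
    ∀ u ∈ raagSupp Γ (wordProd Γ w'), ¬ Γ.Adj v u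

/-- An innermost cancellation of the vertex `v` in the word `w`: a cancellation
`v^{±1} w' v^{∓1}` in which moreover no letter of `w'` involves `v`. -/
def HasInnermostCancellationOf {V : Type*} (Γ : SimpleGraph V) (w : List (V × Bool)) (v : V) :
    Prop :=
  ∃ (w₁ w' w₂ : List (V × Bool)) (b : Bool),
    w = w₁ ++ (v, b) :: (w' ++ (v, !b) :: w₂) ∧
    (∀ u ∈ raagSupp Γ (wordProd Γ w'), ¬ Γ.Adj v u) ∧
    ∀ b' : Bool, (v, b') ∉ w'

/-- A covering of simple graphs: a graph homomorphism which is bijective on neighbor sets. -/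
structure IsGraphCovering {V' V : Type*} (Γ' : SimpleGraph V') (Γ : SimpleGraph V)
    (p : V' → V) : Prop where
  adj : ∀ {x y : V'}, Γ'.Adj x y → Γ.Adj (p x) (p y)
  bijOn : ∀ x : V', Set.BijOn p (Γ'.neighborSet x) (Γ.neighborSet (p x))

/-- A universal cover of a connected graph `Γ`: a covering whose total graph is a tree. -/
def IsUniversalCover {V' V : Type*} (Γ' : SimpleGraph V') (Γ : SimpleGraph V)
    (p : V' → V) : Prop :=
  IsGraphCovering Γ' Γ p ∧ Γ'.IsTree

section Phi

variable {V' V : Type*} [LinearOrder V'] [DecidableEq V]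

/-- The lifts in `T` of a vertex `v`, listed in increasing order. -/
def liftVerts (p : V' → V) (T : Finset V') (v : V) : List V' :=
  (T.filter fun t => p t = v).sort (· ≤ ·)

/-- The lifts in `T` of a vertex `v`, in increasing order, as vertices of the induced subgraph. -/
def liftSubVerts (p : V' → V) (T : Finset V') (v : V) : List (↥(T : Set V')) :=
  (liftVerts p T v).pmap (fun t ht => (⟨t, ht⟩ : ↥(T : Set V')))
    (fun t ht => by
      have : t ∈ T := (Finset.mem_filter.mp ((Finset.mem_sort _).mp ht)).1
      exact Finset.mem_coe.mpr this)

/-- `φ(Γ,T)` sends each vertex `v` of `Γ` to the product, in increasing order,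
of the lifts of `v` lying in `T`.  This predicate singles out the homomorphism `φ(Γ,T)`. -/
def IsPhi (Γ : SimpleGraph V) (Γ' : SimpleGraph V') (p : V' → V) (T : Finset V')
    (φ : Raag Γ →* Raag (Γ'.induce (T : Set V'))) : Prop :=
  ∀ v : V, φ (Raag.of Γ v) =
    ((liftSubVerts p T v).map (Raag.of (Γ'.induce (T : Set V')))).prod

/-- The `φ(Γ,T)`-homomorphic word of a word `w`: each letter `x^{e}` of `w` is replaced by the
word `(t₁ t₂ ⋯ t_k)^{e}` where `t₁ < t₂ < ⋯ < t_k` are the lifts of `x` lying in `T`. -/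
def homWord (p : V' → V) (T : Finset V') (w : List (V × Bool)) :
    List (↥(T : Set V') × Bool) :=
  w.flatMap fun l =>
    if l.2 then (liftSubVerts p T l.1).map (fun t => (t, true))
    else ((liftSubVerts p T l.1).reverse).map (fun t => (t, false))

/-- `φ(Γ,T)` is `F`-surviving: for every reduced word `w` in `G(Γ)` and every `v ∈ F`, the
`φ(Γ,T)`-homomorphic word of `w` has no cancellation of `v`. -/
def IsSurviving (Γ : SimpleGraph V) (Γ' : SimpleGraph V') (p : V' → V) (T : Finset V')
    (F : Set V') : Prop :=
  ∀ w : List (V × Bool), IsReducedWord Γ w →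
    ∀ (v : V') (hv : v ∈ (T : Set V')), v ∈ F →
      ¬ HasCancellationOf (Γ'.induce (T : Set V')) (homWord p T w) ⟨v, hv⟩

end Phi

/-- The braid relators on `n` strands, in the generators `σ₁, …, σ_{n−1}` (indexed by
`Fin (n-1)`): `σᵢσⱼσᵢ = σⱼσᵢσⱼ` when `j = i+1`, and `σᵢσⱼ = σⱼσᵢ` when `j ≥ i+2`. -/
def braidRels (n : ℕ) : Set (FreeGroup (Fin (n - 1))) :=
  {r | ∃ i j : Fin (n - 1),
    ((j : ℕ) = (i : ℕ) + 1 ∧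
      r = FreeGroup.of i * FreeGroup.of j * FreeGroup.of i *
        (FreeGroup.of j * FreeGroup.of i * FreeGroup.of j)⁻¹) ∨
    ((i : ℕ) + 2 ≤ (j : ℕ) ∧
      r = FreeGroup.of i * FreeGroup.of j * (FreeGroup.of j * FreeGroup.of i)⁻¹)}

/-- The braid group `B_n` on `n` strands. -/
abbrev BraidGroup (n : ℕ) : Type := PresentedGroup (braidRels n)

/-- The standard generator `σᵢ` of `B_n`. -/
abbrev braidGen (n : ℕ) (i : Fin (n - 1)) : BraidGroup n := PresentedGroup.of i

namespace RB

/-! ### Word length -/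

section WordLength

variable {G H : Type*} [Group G] [Group H]

theorem wl_le_of_list {S : Set G} (l : List G) (hl : ∀ x ∈ l, x ∈ S ∨ x⁻¹ ∈ S) :
    wordLength S l.prod ≤ l.length :=
  Nat.sInf_le ⟨l, hl, rfl, rfl⟩

theorem wl_exists_list {S : Set G} (hS : Subgroup.closure S = ⊤) (g : G) :
    ∃ l : List G, (∀ x ∈ l, x ∈ S ∨ x⁻¹ ∈ S) ∧ l.prod = g ∧ l.length = wordLength S g := by
  have hne : {n | ∃ l : List G, (∀ x ∈ l, x ∈ S ∨ x⁻¹ ∈ S) ∧ l.prod = g ∧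
      l.length = n}.Nonempty := by
    have hg : g ∈ (Subgroup.closure S).toSubmonoid := by rw [hS]; trivial
    rw [Subgroup.closure_toSubmonoid] at hg
    obtain ⟨l, hl, hg⟩ := Submonoid.exists_list_of_mem_closure hg
    exact ⟨l.length, l, hl, hg, rfl⟩
  exact Nat.sInf_mem hne

theorem wl_mul {S : Set G} (hS : Subgroup.closure S = ⊤) (g h : G) :
    wordLength S (g * h) ≤ wordLength S g + wordLength S h := by
  obtain ⟨l, hl, rfl, hl'⟩ := wl_exists_list hS g
  obtain ⟨r, hr, rfl, hr'⟩ := wl_exists_list hS h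
  rw [← hl', ← hr', ← List.prod_append, ← List.length_append]
  apply wl_le_of_list
  intro x hx
  rcases List.mem_append.1 hx with h | h
  · exact hl x h
  · exact hr x h

theorem wl_one (S : Set G) : wordLength S (1 : G) = 0 := by
  have := wl_le_of_list (S := S) [] (by simp)
  simpa using this

theorem wl_inv_le {S : Set G} (hS : Subgroup.closure S = ⊤) (g : G) :
    wordLength S g⁻¹ ≤ wordLength S g := by
  obtain ⟨l, hl, rfl, hl'⟩ := wl_exists_list hS g
  rw [← hl', List.prod_inv_reverse]
  refine (wl_le_of_list _ ?_).trans (by simp)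
  intro x hx
  simp only [List.mem_reverse, List.mem_map] at hx
  obtain ⟨y, hy, rfl⟩ := hx
  simpa using (hl y hy).symm

theorem wl_inv {S : Set G} (hS : Subgroup.closure S = ⊤) (g : G) :
    wordLength S g⁻¹ = wordLength S g :=
  le_antisymm (wl_inv_le hS g) (by simpa using wl_inv_le hS g⁻¹)

theorem wl_npow {S : Set G} (hS : Subgroup.closure S = ⊤) (g : G) (k : ℕ) :
    wordLength S (g ^ k) ≤ k * wordLength S g := by
  induction k with
  | zero => simp [wl_one]
  | succ k ih =>
    rw [pow_succ, Nat.succ_mul]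
    exact (wl_mul hS _ _).trans (by omega)

theorem wl_zpow {S : Set G} (hS : Subgroup.closure S = ⊤) (g : G) (k : ℤ) :
    wordLength S (g ^ k) ≤ k.natAbs * wordLength S g := by
  obtain ⟨n, rfl | rfl⟩ := k.eq_nat_or_neg
  · simpa using wl_npow hS g n
  · rw [zpow_neg, wl_inv hS]; simpa using wl_npow hS g n

/-- A homomorphism is Lipschitz for word metrics. -/
theorem wl_hom_le {S : Set G} {T : Set H} (hS : Subgroup.closure S = ⊤)
    (hT : Subgroup.closure T = ⊤) (f : G →* H) (C : ℕ)
    (hC : ∀ s ∈ S, wordLength T (f s) ≤ C) (g : G) :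
    wordLength T (f g) ≤ C * wordLength S g := by
  obtain ⟨l, hl, rfl, hl'⟩ := wl_exists_list hS g
  rw [← hl']
  clear hl'
  induction l with
  | nil => simp [wl_one]
  | cons a l ih =>
    rw [List.prod_cons, map_mul, List.length_cons, Nat.mul_succ]
    have h1 : wordLength T (f a) ≤ C := by
      rcases hl a (by simp) with h | h
      · exact hC a h
      · have := hC _ h
        rwa [map_inv, wl_inv hT] at this
    have h2 := ih (fun x hx => hl x (by simp [hx]))
    exact (wl_mul hT _ _).trans (by omega)

end WordLength

/-! ### Reduced syllable words in right-angled Artin groups -/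

section Words

variable {V : Type} (Γ : SimpleGraph V)

/-- The element of `G(Γ)` represented by a syllable word: a syllable `(v, k)` stands for `v ^ k`. -/
def sprod (w : List (V × ℤ)) : Raag Γ := (w.map fun p => Raag.of Γ p.1 ^ p.2).prod

/-- A syllable word is reduced if no exponent vanishes and any two syllables of the same vertex
`v` are separated by a syllable of a vertex adjacent to `v` (that is, not commuting with `v`). -/
def Red (w : List (V × ℤ)) : Prop :=
  (∀ p ∈ w, p.2 ≠ 0) ∧ ∀ A v k X k' B, w = A ++ (v, k) :: (X ++ (v, k') :: B) →
    ∃ x ∈ X, Γ.Adj v x.1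

variable {Γ}

theorem Red.middle {w A X B : List (V × ℤ)} (h : Red Γ w) (e : w = A ++ X ++ B) : Red Γ X := by
  subst e
  refine ⟨fun p hp => h.1 p (by simp [hp]), ?_⟩
  rintro A' v k Y k' B' rfl
  exact h.2 (A ++ A') v k Y k' (B' ++ B) (by simp)

theorem Red.tail {p : V × ℤ} {w : List (V × ℤ)} (h : Red Γ (p :: w)) : Red Γ w :=
  h.middle (A := [p]) (B := []) (by simp)

/-- The syllable word representing the inverse element. -/
def sinv (w : List (V × ℤ)) : List (V × ℤ) := (w.map fun p => (p.1, -p.2)).reverse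

theorem sinv_sinv (w : List (V × ℤ)) : sinv (sinv w) = w := by
  simp [sinv, Function.comp_def]

theorem Red.sinv {w : List (V × ℤ)} (h : Red Γ w) : Red Γ (sinv w) := by
  refine ⟨?_, ?_⟩
  · intro p hp
    simp only [RB.sinv, List.mem_reverse, List.mem_map] at hp
    obtain ⟨q, hq, rfl⟩ := hp
    simpa using h.1 q hq
  · intro A v k X k' B e
    have e2 : w = RB.sinv B ++ (v, -k') :: (RB.sinv X ++ (v, -k) :: RB.sinv A) := by
      rw [← sinv_sinv w, e]; simp [RB.sinv]
    obtain ⟨x, hx, hv⟩ := h.2 _ _ _ _ _ _ e2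
    simp only [RB.sinv, List.mem_reverse, List.mem_map] at hx
    obtain ⟨q, hq, rfl⟩ := hx
    exact ⟨q, hq, hv⟩

variable (Γ)

theorem sprod_append (w w' : List (V × ℤ)) : sprod Γ (w ++ w') = sprod Γ w * sprod Γ w' := by
  simp [sprod]

theorem sprod_cons (p : V × ℤ) (w : List (V × ℤ)) :
    sprod Γ (p :: w) = Raag.of Γ p.1 ^ p.2 * sprod Γ w := by
  simp [sprod]

theorem sprod_sinv (w : List (V × ℤ)) : sprod Γ (sinv w) = (sprod Γ w)⁻¹ := by
  induction w with
  | nil => simp [sprod, sinv]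
  | cons p w ih =>
    have : sinv (p :: w) = sinv w ++ [(p.1, -p.2)] := by simp [sinv]
    rw [this, sprod_append, ih, sprod_cons, sprod_cons, mul_inv_rev]
    simp [sprod]

theorem raag_closure : Subgroup.closure (Set.range (Raag.of Γ)) = ⊤ :=
  PresentedGroup.closure_range_of _

theorem exists_sprod (g : Raag Γ) : ∃ w, sprod Γ w = g := by
  have hg : g ∈ Subgroup.closure (Set.range (Raag.of Γ)) := by rw [raag_closure]; trivial
  induction hg using Subgroup.closure_induction with
  | mem x hx => obtain ⟨v, rfl⟩ := hx; exact ⟨[(v, 1)], by simp [sprod]⟩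
  | one => exact ⟨[], by simp [sprod]⟩
  | mul x y _ _ hx hy =>
    obtain ⟨a, rfl⟩ := hx
    obtain ⟨b, rfl⟩ := hy
    exact ⟨a ++ b, sprod_append Γ a b⟩
  | inv x _ hx => obtain ⟨a, rfl⟩ := hx; exact ⟨sinv a, sprod_sinv Γ a⟩

theorem raag_commute {u v : V} (h : ¬ Γ.Adj u v) : Commute (Raag.of Γ u) (Raag.of Γ v) := by
  by_cases huv : u = v
  · subst huv; exact Commute.refl _
  · have : (FreeGroup.of u * FreeGroup.of v * (FreeGroup.of u)⁻¹ * (FreeGroup.of v)⁻¹) ∈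
        raagRels Γ := ⟨u, v, huv, h, rfl⟩
    have h1 := PresentedGroup.one_of_mem this
    simp only [map_mul, map_inv] at h1
    have h2 : Raag.of Γ u * Raag.of Γ v * (Raag.of Γ u)⁻¹ * (Raag.of Γ v)⁻¹ = 1 := h1
    rw [mul_inv_eq_one, mul_inv_eq_iff_eq_mul] at h2
    exact h2

theorem commute_sprod {v : V} {X : List (V × ℤ)} (h : ∀ x ∈ X, ¬ Γ.Adj v x.1) (k : ℤ) :
    Commute (Raag.of Γ v ^ k) (sprod Γ X) := by
  apply Commute.list_prod_right
  intro y hy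
  obtain ⟨x, hx, rfl⟩ := List.mem_map.1 hy
  exact (raag_commute Γ (h x hx)).zpow_zpow _ _

theorem exists_red (g : Raag Γ) : ∃ w, Red Γ w ∧ sprod Γ w = g := by
  obtain ⟨w, hw, hmin⟩ := (measure (List.length (α := V × ℤ))).wf.has_min
    {w | sprod Γ w = g} (exists_sprod Γ g)
  have hmin' : ∀ w', sprod Γ w' = g → w.length ≤ w'.length := fun w' h =>
    not_lt.1 (hmin w' h)
  refine ⟨w, ⟨?_, ?_⟩, hw⟩
  · intro p hp h0
    obtain ⟨A, B, rfl⟩ := List.append_of_mem hp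
    have := hmin' (A ++ B) (by
      rw [← hw, sprod_append, sprod_append, sprod_cons, h0]; simp)
    simp at this
  · rintro A v k X k' B rfl
    by_contra! hX
    have := hmin' (A ++ (v, k + k') :: (X ++ B)) (by
      have hc : Raag.of Γ v ^ k' * sprod Γ X = sprod Γ X * Raag.of Γ v ^ k' :=
        commute_sprod Γ hX k'
      rw [← hw]
      simp only [sprod_append, sprod_cons, zpow_add]
      simp only [mul_assoc]
      rw [← mul_assoc (Raag.of Γ v ^ k') (sprod Γ X), hc, mul_assoc])
    simp at this

theorem raagNorm_sprod_le (w : List (V × ℤ)) :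
    raagNorm Γ (sprod Γ w) ≤ (w.map fun p => p.2.natAbs).sum := by
  induction w with
  | nil => simp [raagNorm, sprod, wl_one]
  | cons p w ih =>
    rw [sprod_cons, List.map_cons, List.sum_cons]
    have h1 : wordLength (Set.range (Raag.of Γ)) (Raag.of Γ p.1) ≤ 1 := by
      simpa using wl_le_of_list (S := Set.range (Raag.of Γ)) [Raag.of Γ p.1] (by simp)
    have h2 := wl_zpow (raag_closure Γ) (Raag.of Γ p.1) p.2
    have h3 := wl_mul (raag_closure Γ) (Raag.of Γ p.1 ^ p.2) (sprod Γ w)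
    have h4 := Nat.mul_le_mul_left p.2.natAbs h1
    unfold raagNorm at *
    lia

end Words

end RB

namespace RB

/-! ### Full twists of two strands in the braid group -/

section Braids

variable {n : ℕ}

/-- The generator `σᵢ`, extended by `1` to all natural indices. -/
def sig (n : ℕ) (i : ℕ) : BraidGroup n := if h : i < n - 1 then braidGen n ⟨i, h⟩ else 1

theorem sig_of_lt {i : ℕ} (h : i < n - 1) : sig n i = braidGen n ⟨i, h⟩ := dif_pos h

theorem sig_braid {i : ℕ} (h : i + 1 < n - 1) :
    sig n i * sig n (i + 1) * sig n i = sig n (i + 1) * sig n i * sig n (i + 1) := by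
  rw [sig_of_lt h, sig_of_lt (show i < n - 1 by omega)]
  exact PresentedGroup.mk_eq_mk_of_mul_inv_mem ⟨⟨i, by omega⟩, ⟨i + 1, h⟩, Or.inl ⟨rfl, rfl⟩⟩

theorem sig_comm {i j : ℕ} (h : i + 2 ≤ j) : Commute (sig n i) (sig n j) := by
  by_cases hj : j < n - 1
  · rw [sig_of_lt hj, sig_of_lt (show i < n - 1 by omega)]
    exact PresentedGroup.mk_eq_mk_of_mul_inv_mem ⟨⟨i, by omega⟩, ⟨j, hj⟩, Or.inr ⟨h, rfl⟩⟩
  · rw [sig, sig, dif_neg hj]; exact Commute.one_right _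

/-- The full twist of the strands `i` and `i + d + 1`, passing all strands between them on the
same side: the conjugate of `σᵢ²` by `σᵢ₊₁ ⋯ σᵢ₊d`. -/
def tw (n : ℕ) (i : ℕ) : ℕ → BraidGroup n
  | 0 => sig n i ^ 2
  | d + 1 => (sig n (i + d + 1))⁻¹ * tw n i d * sig n (i + d + 1)

theorem tw_succ (i d : ℕ) : tw n i (d + 1) = (sig n (i + d + 1))⁻¹ * tw n i d * sig n (i + d + 1) := rfl

/-- Whatever commutes with the generators supporting a twist commutes with the twist. -/
theorem commute_tw {g : BraidGroup n} {i d : ℕ}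
    (h : ∀ p, i ≤ p → p ≤ i + d → Commute g (sig n p)) : Commute g (tw n i d) := by
  induction d with
  | zero => exact (h i le_rfl le_rfl).pow_right 2
  | succ d ih =>
    have h1 := h (i + d + 1) (by omega) (by omega)
    exact (h1.inv_right.mul_right (ih fun p hp hp' => h p hp (by omega))).mul_right h1

theorem commute_sig_tw_of_inside {i d p : ℕ} (hn : i + d < n - 1) (h1 : i < p) (h2 : p < i + d) :
    Commute (sig n p) (tw n i d) := by
  induction d generalizing p with
  | zero => omega
  | succ d ih =>
    rcases Nat.lt_succ_iff_lt_or_eq.1 (show p < i + d + 1 from h2) with h | h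
    · have h3 : Commute (sig n p) (sig n (i + d + 1)) := sig_comm (by omega)
      exact (h3.inv_right.mul_right (ih (by omega) h1 h)).mul_right h3
    · obtain ⟨e, rfl⟩ : ∃ e, d = e + 1 := ⟨d - 1, by omega⟩
      subst h
      have hT : Commute (sig n (i + (e + 1) + 1)) (tw n i e) :=
        commute_tw fun q _ hq => (sig_comm (by omega)).symm
      have hb := sig_braid (n := n) (i := i + (e + 1)) (by omega)
      have hT' := hT.eq
      rw [tw_succ, tw_succ, show i + e + 1 = i + (e + 1) by omega]
      generalize sig n (i + (e + 1) + 1) = b at *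
      generalize sig n (i + (e + 1)) = a at *
      generalize tw n i e = T at *
      have e1 : a * b⁻¹ * a⁻¹ = b⁻¹ * a⁻¹ * b := by
        rw [mul_inv_eq_iff_eq_mul, mul_inv_eq_iff_eq_mul]
        calc a = b⁻¹ * a⁻¹ * (a * b * a) := by group
          _ = b⁻¹ * a⁻¹ * (b * a * b) := by rw [hb]
          _ = _ := by group
      show a * (b⁻¹ * (a⁻¹ * T * a) * b) = b⁻¹ * (a⁻¹ * T * a) * b * a
      calc a * (b⁻¹ * (a⁻¹ * T * a) * b) = (a * b⁻¹ * a⁻¹) * T * a * b := by group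
        _ = b⁻¹ * a⁻¹ * (b * T) * a * b := by rw [e1]; group
        _ = b⁻¹ * a⁻¹ * T * (b * a * b) := by rw [hT']; group
        _ = b⁻¹ * a⁻¹ * T * (a * b * a) := by rw [hb]
        _ = _ := by group

/-- The full twist of the strands `a < b`. -/
def twc (n a b : ℕ) : BraidGroup n := tw n a (b - a - 1)

theorem commute_twc_of_disjoint {a b c d : ℕ} (h1 : a < b) (h2 : b < c) (_ : c < d) :
    Commute (twc n a b) (twc n c d) := by
  refine commute_tw fun p hp hp' => ?_
  refine (commute_tw fun q _ hq => ?_).symm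
  exact (sig_comm (by omega)).symm

theorem commute_twc_of_nested {a b c d : ℕ} (hb : b < n) (h1 : a < c) (h2 : c < d) (h3 : d < b) :
    Commute (twc n a b) (twc n c d) := by
  refine commute_tw fun p hp hp' => ?_
  exact (commute_sig_tw_of_inside (by omega) (by omega) (by omega)).symm

/-- The transposition attached to the generator `σᵢ`. -/
def sw (n : ℕ) (i : Fin (n - 1)) : Equiv.Perm (Fin n) :=
  Equiv.swap ⟨(i : ℕ), by have := i.isLt; omega⟩ ⟨(i : ℕ) + 1, by have := i.isLt; omega⟩

theorem exists_pi (n : ℕ) : ∃ π : BraidGroup n →* Equiv.Perm (Fin n), ∀ i : Fin (n - 1),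
    π (braidGen n i) = sw n i := by
  have h : ∀ r ∈ braidRels n, FreeGroup.lift (sw n) r = 1 := by
    rintro r ⟨i, j, ⟨hij, rfl⟩ | ⟨hij, rfl⟩⟩
    · simp only [map_mul, map_inv, FreeGroup.lift_apply_of]
      rw [mul_inv_eq_one]
      obtain ⟨i, hi⟩ := i
      obtain ⟨j, hj⟩ := j
      simp only at hij
      subst hij
      simp only [sw]
      ext x
      simp only [Equiv.Perm.coe_mul, Function.comp_apply, Equiv.swap_apply_def, Fin.ext_iff]
      grind
    · simp only [map_mul, map_inv, FreeGroup.lift_apply_of]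
      rw [mul_inv_eq_one]
      obtain ⟨i, hi⟩ := i
      obtain ⟨j, hj⟩ := j
      simp only at hij
      simp only [sw]
      ext x
      simp only [Equiv.Perm.coe_mul, Function.comp_apply, Equiv.swap_apply_def, Fin.ext_iff]
      grind
  exact ⟨PresentedGroup.toGroup h, fun i => PresentedGroup.toGroup.of h⟩

theorem tw_mem_ker {π : BraidGroup n →* Equiv.Perm (Fin n)}
    (hπ : ∀ i : Fin (n - 1), π (braidGen n i) = sw n i) (i d : ℕ) : tw n i d ∈ π.ker := by
  rw [MonoidHom.mem_ker]
  induction d with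
  | zero =>
    by_cases h : i < n - 1
    · rw [tw, sig_of_lt h, map_pow, hπ, sw, pow_two, Equiv.swap_mul_self]
    · rw [tw, sig, dif_neg h]; simp
  | succ d ih => rw [tw_succ, map_mul, map_mul, ih, map_inv]; group

theorem ker_fg (π : BraidGroup n →* Equiv.Perm (Fin n)) :
    ∃ T : Finset π.ker, Subgroup.closure (T : Set π.ker) = ⊤ := by
  have : Group.FG (BraidGroup n) := by
    rw [Group.fg_iff]
    exact ⟨Set.range (PresentedGroup.of (rels := braidRels n)),
      PresentedGroup.closure_range_of _, Set.finite_range _⟩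
  have : π.ker.FiniteIndex := inferInstance
  have h : Group.FG π.ker := inferInstance
  obtain ⟨T, hT⟩ := h.1
  exact ⟨T, hT⟩

end Braids

end RB

namespace RB

/-! ### The coloured Burau representation -/

section Burau

variable {K : Type} [Field K]

/-- The space on which the braid group acts: functions assigning a vector to each colouring of the
strands by units of `K`. A braid permutes the colours, so it acts on such functions rather than on
single vectors. -/
abbrev Om (K : Type) [Field K] := (ℕ → Kˣ) → (ℕ → K)

/-- Exchange the colours of the strands `i` and `i + 1`. -/
def sh (i : ℕ) (τ : ℕ → Kˣ) : ℕ → Kˣ := fun k => τ (Equiv.swap i (i + 1) k)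

@[simp] theorem sh_left (i : ℕ) (τ : ℕ → Kˣ) : sh i τ i = τ (i + 1) := by simp [sh]
@[simp] theorem sh_right (i : ℕ) (τ : ℕ → Kˣ) : sh i τ (i + 1) = τ i := by simp [sh]
theorem sh_ne {i k : ℕ} (τ : ℕ → Kˣ) (h1 : k ≠ i) (h2 : k ≠ i + 1) : sh i τ k = τ k := by
  rw [sh, Equiv.swap_apply_of_ne_of_ne h1 h2]
@[simp] theorem sh_sh (i : ℕ) (τ : ℕ → Kˣ) : sh i (sh i τ) = τ := by
  funext k; simp [sh]

/-- The coloured Burau matrix of `σᵢ`. -/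
def Cb (i : ℕ) (τ : ℕ → Kˣ) (y : ℕ → K) : ℕ → K := fun j =>
  if j = i then (1 - τ (i + 1)) * y i + y (i + 1) else if j = i + 1 then τ i * y i else y j

/-- The coloured Burau matrix of `σᵢ⁻¹`. -/
def Db (i : ℕ) (τ : ℕ → Kˣ) (y : ℕ → K) : ℕ → K := fun j =>
  if j = i then ↑(τ (i + 1))⁻¹ * y (i + 1)
  else if j = i + 1 then y i - (1 - τ i) * (↑(τ (i + 1))⁻¹ * y (i + 1)) else y j

theorem Cb_Db (i : ℕ) (τ : ℕ → Kˣ) (y : ℕ → K) : Cb i τ (Db i (sh i τ) y) = y := by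
  funext j
  simp only [Cb, Db]
  by_cases h1 : j = i
  · subst h1; simp
  by_cases h2 : j = i + 1
  · subst h2; simp
  · simp [h1, h2]

theorem Db_Cb (i : ℕ) (τ : ℕ → Kˣ) (y : ℕ → K) : Db i τ (Cb i (sh i τ) y) = y := by
  funext j
  simp only [Cb, Db]
  by_cases h1 : j = i
  · subst h1; simp
  by_cases h2 : j = i + 1
  · subst h2; simp
  · simp [h1, h2]

/-- The action of `σᵢ` in the coloured Burau representation. -/
def bur (i : ℕ) : Equiv.Perm (Om K) where
  toFun x τ := Cb i τ (x (sh i τ))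
  invFun x τ := Db i τ (x (sh i τ))
  left_inv x := by funext τ; simp only [sh_sh, Db_Cb]
  right_inv x := by funext τ; simp only [sh_sh, Cb_Db]

theorem bur_apply (i : ℕ) (x : Om K) (τ : ℕ → Kˣ) : bur i x τ = Cb i τ (x (sh i τ)) := rfl

theorem bur_inv_apply (i : ℕ) (x : Om K) (τ : ℕ → Kˣ) :
    (bur i)⁻¹ x τ = Db i τ (x (sh i τ)) := rfl

theorem bur_comm {i j : ℕ} (h : i + 2 ≤ j) : bur (K := K) i * bur j = bur j * bur i := by
  ext x τ k
  have e : sh j (sh i τ) = sh i (sh j τ) := by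
    funext k
    simp only [sh, Equiv.swap_apply_def]
    grind
  simp only [Equiv.Perm.coe_mul, Function.comp_apply, bur_apply, e]
  generalize x _ = y
  have h1 := sh_ne (i := i) (k := j) τ (by omega) (by omega)
  have h2 := sh_ne (i := i) (k := j + 1) τ (by omega) (by omega)
  have h3 := sh_ne (i := j) (k := i) τ (by omega) (by omega)
  have h4 := sh_ne (i := j) (k := i + 1) τ (by omega) (by omega)
  simp only [Cb, h1, h2, h3, h4]
  split_ifs <;> first | omega | rfl

set_option linter.unusedSimpArgs false in
theorem bur_braid (i : ℕ) :
    bur (K := K) i * bur (i + 1) * bur i = bur (i + 1) * bur i * bur (i + 1) := by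
  ext x τ k
  have e : sh i (sh (i + 1) (sh i τ)) = sh (i + 1) (sh i (sh (i + 1) τ)) := by
    funext k
    simp only [sh, Equiv.swap_apply_def]
    grind
  simp only [Equiv.Perm.coe_mul, Function.comp_apply, bur_apply, e]
  generalize x _ = y
  have h1 := sh_ne (i := i) (k := i + 2) τ (by omega) (by omega)
  have h3 := sh_ne (i := i + 1) (k := i) τ (by omega) (by omega)
  have h4 := sh_right (i + 1) τ
  have h5 := sh_ne (i := i + 1) (k := i) (sh i τ) (by omega) (by omega)
  have h6 := sh_right (i + 1) (sh i τ)
  have h7 := sh_ne (i := i) (k := i + 2) (sh (i + 1) τ) (by omega) (by omega)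
  simp only [show i + 1 + 1 = i + 2 from rfl] at *
  have n1 : i + 2 ≠ i := by omega
  have n2 : i ≠ i + 2 := by omega
  by_cases k1 : k = i
  · subst k1; simp [Cb, h1, h3, h4, h5, h6, h7, n1, n2]; try ring
  by_cases k2 : k = i + 1
  · subst k2; simp [Cb, h1, h3, h4, h5, h6, h7, n1, n2]; try ring
  by_cases k3 : k = i + 2
  · subst k3; simp [Cb, h1, h3, h4, h5, h6, h7, n1, n2]; try ring
  · have : k ≠ i + 1 + 1 := k3
    simp [Cb, k1, k2, this]

variable (K) in
theorem exists_burau (n : ℕ) : ∃ R : BraidGroup n →* Equiv.Perm (Om K),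
    ∀ i, i < n - 1 → R (sig n i) = bur i := by
  have h : ∀ r ∈ braidRels n,
      FreeGroup.lift (fun i : Fin (n - 1) => bur (K := K) (i : ℕ)) r = 1 := by
    rintro r ⟨i, j, ⟨hij, rfl⟩ | ⟨hij, rfl⟩⟩
    · simp only [map_mul, map_inv, FreeGroup.lift_apply_of]
      rw [mul_inv_eq_one, hij, bur_braid]
    · simp only [map_mul, map_inv, FreeGroup.lift_apply_of]
      rw [mul_inv_eq_one, bur_comm hij]
  refine ⟨PresentedGroup.toGroup h, fun i hi => ?_⟩
  rw [sig_of_lt hi]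
  exact PresentedGroup.toGroup.of h

variable (K) in
/-- The coloured Burau representation of the braid group. -/
noncomputable def R (n : ℕ) : BraidGroup n →* Equiv.Perm (Om K) := (exists_burau K n).choose

theorem R_sig {n i : ℕ} (hi : i < n - 1) : R K n (sig n i) = bur i :=
  (exists_burau K n).choose_spec i hi

/-- The linear form of the transvection by which the full twist of the strands `i < j` acts. -/
noncomputable def phi (i j : ℕ) (τ : ℕ → Kˣ) : (ℕ → K) →ₗ[K] K :=
  (τ i : K) • LinearMap.proj i -
    ∑ k ∈ Finset.Ioo i j, (1 - (τ k : K)) • LinearMap.proj k - LinearMap.proj j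

/-- The vector of the transvection by which the full twist of the strands `i < j` acts. -/
def Ev (i j : ℕ) (τ : ℕ → Kˣ) : ℕ → K := fun k =>
  if k = j then 1 - τ i else if k = i then -(1 - τ j) else 0

theorem phi_apply (i j : ℕ) (τ : ℕ → Kˣ) (y : ℕ → K) :
    phi i j τ y = τ i * y i - ∑ k ∈ Finset.Ioo i j, (1 - (τ k : K)) * y k - y j := by
  simp [phi, LinearMap.sum_apply]

/-- Full twists act as transvections `x ↦ x + φ(x) E`. -/
theorem R_tw {n i d : ℕ} (h : i + d < n - 1) (x : Om K) (τ : ℕ → Kˣ) :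
    R K n (tw n i d) x τ = x τ + phi i (i + d + 1) τ (x τ) • Ev i (i + d + 1) τ := by
  induction d generalizing x τ with
  | zero =>
    rw [tw, pow_two, map_mul, R_sig (by omega), Equiv.Perm.mul_apply, bur_apply, bur_apply, sh_sh]
    generalize x τ = y
    have : Finset.Ioo i (i + 0 + 1) = ∅ := by ext; simp
    funext k
    simp only [Pi.add_apply, Pi.smul_apply, smul_eq_mul, phi_apply, this, Finset.sum_empty, Ev, Cb,
      add_zero, sub_zero]
    by_cases h1 : k = i
    · subst h1; simp; ring
    by_cases h2 : k = i + 1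
    · subst h2; simp; ring
    · simp [h1, h2]
  | succ d ih =>
    have key : R K n (tw n i d) (bur (i + d + 1) x) =
        bur (i + d + 1) (fun τ => x τ + phi i (i + (d + 1) + 1) τ (x τ) •
          Ev i (i + (d + 1) + 1) τ) := by
      funext τ
      rw [ih (by omega), bur_apply, bur_apply]
      generalize x (sh (i + d + 1) τ) = y
      have hi := sh_ne (i := i + d + 1) (k := i) τ (by omega) (by omega)
      rw [show i + (d + 1) + 1 = i + d + 1 + 1 by omega]
      set j := i + d + 1 with hj
      have hI : Finset.Ioo i (j + 1) = insert j (Finset.Ioo i j) := by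
        ext k; simp only [Finset.mem_Ioo, Finset.mem_insert]; omega
      have hp : phi i j τ (Cb j τ y) = phi i (j + 1) (sh j τ) y := by
        rw [phi_apply, phi_apply, hI, Finset.sum_insert (by simp), hi, sh_left]
        have hs : ∑ k ∈ Finset.Ioo i j, (1 - (τ k : K)) * Cb j τ y k =
            ∑ k ∈ Finset.Ioo i j, (1 - ((sh j τ) k : K)) * y k := by
          refine Finset.sum_congr rfl fun k hk => ?_
          simp only [Finset.mem_Ioo] at hk
          rw [sh_ne τ (by omega) (by omega)]
          simp only [Cb]
          rw [if_neg (by omega), if_neg (by omega)]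
        rw [hs]
        have h1 : Cb j τ y i = y i := by
          simp only [Cb]; rw [if_neg (by omega), if_neg (by omega)]
        have h2 : Cb j τ y j = (1 - τ (j + 1)) * y j + y (j + 1) := by simp [Cb]
        rw [h1, h2]; ring
      rw [hp]
      generalize phi i (j + 1) (sh j τ) y = c
      funext k
      simp only [Pi.add_apply, Pi.smul_apply, smul_eq_mul, Cb, Ev, hi, sh_right]
      by_cases h1 : k = j
      · subst h1; simp [show j ≠ i by omega]; ring
      by_cases h2 : k = j + 1
      · subst h2; simp [show j ≠ i by omega, show j + 1 ≠ i by omega]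
      · simp [h1, h2]
    rw [tw_succ, map_mul, map_mul, map_inv, R_sig (by omega), Equiv.Perm.mul_apply,
      Equiv.Perm.mul_apply, key, ← Equiv.Perm.mul_apply, inv_mul_cancel, Equiv.Perm.one_apply]

theorem phi_Ev_self {i j : ℕ} (h : i < j) (τ : ℕ → Kˣ) :
    phi i j τ (Ev i j τ) = τ i * τ j - 1 := by
  rw [phi_apply, Finset.sum_eq_zero]
  · simp [Ev, h.ne]; ring
  · intro k hk
    simp only [Finset.mem_Ioo] at hk
    simp only [Ev]
    rw [if_neg (by omega), if_neg (by omega), mul_zero]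

theorem phi_Ev {i j k l : ℕ} (τ : ℕ → Kˣ) (hkl : k ≠ l) (h1 : k ≠ i) (h2 : k ≠ j) (h3 : l ≠ i)
    (h4 : l ≠ j) : phi i j τ (Ev k l τ) = (1 - τ k) * (1 - τ l) *
      ((if k ∈ Finset.Ioo i j then 1 else 0) - (if l ∈ Finset.Ioo i j then 1 else 0)) := by
  have e : ∀ p, (1 - (τ p : K)) * Ev k l τ p = (if p = l then (1 - (τ l : K)) * (1 - τ k) else 0) -
      (if p = k then (1 - (τ l : K)) * (1 - τ k) else 0) := by
    intro p
    simp only [Ev]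
    by_cases hl : p = l
    · subst hl; simp [hkl.symm]
    by_cases hk : p = k
    · subst hk; simp [hkl]; ring
    · simp [hl, hk]
  rw [phi_apply]
  simp only [e, Finset.sum_sub_distrib, Finset.sum_ite_eq']
  simp only [Ev]
  rw [if_neg h3.symm, if_neg h1.symm, if_neg h4.symm, if_neg h2.symm]
  split_ifs <;> ring

/-- Powers of a full twist. -/
theorem R_twc_zpow {n i j : ℕ} (hij : i < j) (hj : j < n) (τ : ℕ → Kˣ)
    (hq : (τ i : K) * τ j ≠ 1) (k : ℤ) (x : Om K) :
    R K n (twc n i j ^ k) x τ = x τ + ((((τ i : K) * τ j) ^ k - 1) / (τ i * τ j - 1) *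
      phi i j τ (x τ)) • Ev i j τ := by
  have h1 : ∀ x, R K n (twc n i j) x τ = x τ + phi i j τ (x τ) • Ev i j τ := by
    intro x
    have := R_tw (K := K) (n := n) (i := i) (d := j - i - 1) (by omega) x τ
    rwa [show i + (j - i - 1) + 1 = j by omega] at this
  have hE := phi_Ev_self hij τ
  set q : K := τ i * τ j with hqd
  have hq0 : q ≠ 0 := by simp [hqd]
  have hq1 : q - 1 ≠ 0 := sub_ne_zero.2 hq
  induction k with
  | zero => simp
  | succ k ih =>
    rw [zpow_add, zpow_one, (Commute.refl (twc n i j)).zpow_left _ |>.eq, map_mul,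
      Equiv.Perm.mul_apply, h1, ih, map_add, map_smul, hE, zpow_add₀ hq0, zpow_one, add_assoc,
      ← add_smul]
    congr 2
    simp only [smul_eq_mul]
    field_simp
    ring
  | pred k ih =>
    have h2 := h1 (R K n (twc n i j ^ (-(k : ℤ) - 1)) x)
    rw [← Equiv.Perm.mul_apply, ← map_mul, ← zpow_one_add, show 1 + (-(k : ℤ) - 1) = -k by ring,
      ih] at h2
    set z := R K n (twc n i j ^ (-(k : ℤ) - 1)) x τ with hz
    have h3 := congrArg (phi i j τ) h2
    rw [map_add, map_add, map_smul, map_smul, hE] at h3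
    simp only [smul_eq_mul] at h3
    have h4 : phi i j τ z = q ^ (-(k : ℤ) - 1) * phi i j τ (x τ) := by
      have : phi i j τ z * q = q ^ (-(k : ℤ)) * phi i j τ (x τ) := by
        field_simp at h3
        linear_combination -h3
      rw [zpow_sub₀ hq0, zpow_one]
      field_simp
      linear_combination this
    rw [h4] at h2
    rw [eq_sub_of_add_eq h2.symm, add_sub_assoc, ← sub_smul]
    congr 2
    rw [zpow_sub₀ hq0, zpow_one]
    field_simp
    ring

end Burau

end RB

namespace RB

/-! ### A chord diagram realising the tree -/

section Chords

/-- Right end of the chord of the node with address `c` (a list of indices, root first), at scale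
`B ^ k`. -/
def rho (B : ℤ) : ℕ → List ℕ → ℤ
  | _, [] => 0
  | 0, _ :: _ => 0
  | k + 1, i :: c => i * B ^ k + rho B k c

/-- Left end of the chord of the node with address `c` (a list of indices, root first), at scale
`B ^ k`: the chords of the children of a node are nested around its right end. -/
def lam (B : ℤ) : ℕ → List ℕ → ℤ
  | k, [] => -B ^ k
  | 0, _ :: _ => 0
  | k + 1, [i] => -(i * B ^ k)
  | k + 1, i :: j :: c => i * B ^ k + lam B k (j :: c)

/-- Addresses of length at most `k` with indices in `1, …, m`. -/
def Adr (m k : ℕ) (c : List ℕ) : Prop := c.length ≤ k ∧ ∀ i ∈ c, 1 ≤ i ∧ i ≤ m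

variable {m : ℕ}

theorem Adr.tail {k i : ℕ} {c : List ℕ} (h : Adr m (k + 1) (i :: c)) :
    Adr m k c ∧ (1 : ℤ) ≤ i ∧ (i : ℤ) ≤ m := by
  refine ⟨⟨by simpa using h.1, fun j hj => h.2 j (by simp [hj])⟩, ?_⟩
  have := h.2 i (by simp)
  omega

theorem Adr.not_zero {i : ℕ} {c : List ℕ} (h : Adr m 0 (i :: c)) : False := by
  have := h.1; simp at this

section
variable {B : ℤ} (hB : B = 2 * m + 2)
include hB

theorem rho_bound {k : ℕ} {c : List ℕ} (h : Adr m k c) :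
    0 ≤ rho B k c ∧ 2 * rho B k c < B ^ k ∧ (c ≠ [] → 0 < rho B k c) := by
  induction k generalizing c with
  | zero =>
    cases c with
    | nil => simp [rho]
    | cons i c => exact h.not_zero.elim
  | succ k ih =>
    have hP : 0 < B ^ k := pow_pos (by omega) k
    cases c with
    | nil => simp [rho, pow_succ]; nlinarith
    | cons i c =>
      obtain ⟨h1, h2, h3⟩ := h.tail
      obtain ⟨a, b, -⟩ := ih h1
      have e : B ^ (k + 1) = 2 * (m * B ^ k) + 2 * B ^ k := by rw [pow_succ, hB]; ring
      have f1 := mul_le_mul_of_nonneg_right h2 hP.le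
      have f2 := mul_le_mul_of_nonneg_right h3 hP.le
      simp only [rho, e]
      refine ⟨by linarith, by linarith, fun _ => by linarith⟩

theorem lam_bound {k : ℕ} {c : List ℕ} (h : Adr m k c) (hc : c ≠ []) :
    2 * lam B k c < B ^ k ∧ -B ^ k < 2 * lam B k c := by
  induction k generalizing c with
  | zero =>
    cases c with
    | nil => exact absurd rfl hc
    | cons i c => exact h.not_zero.elim
  | succ k ih =>
    have hP : 0 < B ^ k := pow_pos (by omega) k
    have e : B ^ (k + 1) = 2 * (m * B ^ k) + 2 * B ^ k := by rw [pow_succ, hB]; ring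
    rcases c with _ | ⟨i, _ | ⟨j, c⟩⟩
    · exact absurd rfl hc
    · obtain ⟨-, h2, h3⟩ := h.tail
      have f1 := mul_le_mul_of_nonneg_right h2 hP.le
      have f2 := mul_le_mul_of_nonneg_right h3 hP.le
      simp only [lam, e]
      constructor <;> linarith
    · obtain ⟨h1, h2, h3⟩ := h.tail
      have f1 := mul_le_mul_of_nonneg_right h2 hP.le
      have f2 := mul_le_mul_of_nonneg_right h3 hP.le
      obtain ⟨a, b⟩ := ih h1 (by simp)
      simp only [lam, e]
      constructor <;> linarith

theorem lam_ge {k : ℕ} {c : List ℕ} (h : Adr m k c) : -B ^ k ≤ lam B k c := by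
  rcases c with _ | ⟨i, c⟩
  · simp [lam]
  · have := (lam_bound hB h (by simp)).2
    have hP : 0 < B ^ k := pow_pos (by omega) k
    linarith

theorem lam_lt_rho {k : ℕ} {c : List ℕ} (h : Adr m k c) : lam B k c < rho B k c := by
  induction k generalizing c with
  | zero =>
    cases c with
    | nil => simp [lam, rho]
    | cons i c => exact h.not_zero.elim
  | succ k ih =>
    have hP : 0 < B ^ k := pow_pos (by omega) k
    rcases c with _ | ⟨i, _ | ⟨j, c⟩⟩
    · have hP : 0 < B ^ (k + 1) := pow_pos (by omega) _
      simp [lam, rho, hP]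
    · obtain ⟨-, h2, h3⟩ := h.tail
      have f1 := mul_le_mul_of_nonneg_right h2 hP.le
      simp only [lam, rho]
      linarith
    · have := ih h.tail.1
      rw [lam, rho]
      linarith

/-- The chords of a node and of its child cross. -/
theorem chord_cross {k j : ℕ} {s : List ℕ} (h : Adr m k (s ++ [j])) :
    lam B k s < lam B k (s ++ [j]) ∧ lam B k (s ++ [j]) < rho B k s ∧
      rho B k s < rho B k (s ++ [j]) := by
  induction k generalizing s with
  | zero => have := h.1; simp at this
  | succ k ih =>
    have hP : 0 < B ^ k := pow_pos (by omega) k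
    have e : B ^ (k + 1) = 2 * (m * B ^ k) + 2 * B ^ k := by rw [pow_succ, hB]; ring
    rcases s with _ | ⟨i, _ | ⟨i', s⟩⟩
    · obtain ⟨-, h2, h3⟩ := h.tail
      have f1 := mul_le_mul_of_nonneg_right h2 hP.le
      have f2 := mul_le_mul_of_nonneg_right h3 hP.le
      simp only [List.nil_append, lam, rho, e]
      refine ⟨?_, ?_, ?_⟩ <;> linarith
    · obtain ⟨h1, h2, h3⟩ := h.tail
      have h1 : Adr m k [j] := h1
      have f1 := mul_le_mul_of_nonneg_right h2 hP.le
      obtain ⟨a, b⟩ := lam_bound hB h1 (by simp)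
      have c := (rho_bound hB h1).2.2 (by simp)
      have a' : lam B k [j] < 0 := by
        cases k with
        | zero => exact h1.not_zero.elim
        | succ k =>
          have := mul_le_mul_of_nonneg_right h1.tail.2.1 (pow_pos (show 0 < B by omega) k).le
          have hP : 0 < B ^ k := pow_pos (by omega) k
          simp only [lam]; linarith
      simp only [List.cons_append, List.nil_append, lam, rho]
      refine ⟨?_, ?_, ?_⟩ <;> linarith
    · have := ih h.tail.1
      simp only [List.cons_append, lam, rho] at this ⊢
      refine ⟨?_, ?_, ?_⟩ <;> linarith

/-- The chords of two distinct nodes, neither of which is a child of the other, do not cross. -/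
theorem chord_not_cross {k : ℕ} {s c : List ℕ} (hs : Adr m k s) (hc : Adr m k c) (hsc : s ≠ c)
    (h1 : ∀ j, c ≠ s ++ [j]) (h2 : ∀ j, s ≠ c ++ [j]) :
    rho B k c < lam B k s ∨ rho B k s < lam B k c ∨
      (lam B k s < lam B k c ∧ rho B k c < rho B k s) ∨
      (lam B k c < lam B k s ∧ rho B k s < rho B k c) := by
  induction k generalizing s c with
  | zero =>
    rcases s with _ | ⟨i, s⟩
    · rcases c with _ | ⟨j, c⟩
      · exact absurd rfl hsc
      · exact hc.not_zero.elim
    · exact hs.not_zero.elim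
  | succ k ih =>
    have hP : 0 < B ^ k := pow_pos (by omega) k
    have lt : ∀ {i j : ℕ}, i < j → (i : ℤ) * B ^ k + B ^ k ≤ j * B ^ k := by
      intro i j hij
      have : (i : ℤ) + 1 ≤ j := by omega
      have := mul_le_mul_of_nonneg_right this hP.le
      linarith
    have pos : ∀ {k : ℕ} {i j : ℕ} {c : List ℕ}, Adr m k (i :: j :: c) →
        0 < lam B k (i :: j :: c) := by
      intro k i j c h
      cases k with
      | zero => exact h.not_zero.elim
      | succ k =>
        have hP : 0 < B ^ k := pow_pos (by omega) k
        have f := mul_le_mul_of_nonneg_right h.tail.2.1 hP.le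
        have := (lam_bound hB h.tail.1 (by simp)).2
        rw [lam]; linarith
    rcases s with _ | ⟨i, _ | ⟨i', s⟩⟩ <;> rcases c with _ | ⟨j, _ | ⟨j', c⟩⟩
    · exact absurd rfl hsc
    · exact absurd rfl (h1 j)
    · right; left; rw [rho]; exact pos hc
    · exact absurd rfl (h2 i)
    · rcases lt_trichotomy i j with h | h | h
      · have := lt h
        simp only [lam, rho]
        right; right; right; constructor <;> linarith
      · exact absurd (by rw [h]) hsc
      · have := lt h
        simp only [lam, rho]
        right; right; left; constructor <;> linarith
    · obtain ⟨a, b⟩ := lam_bound hB hc.tail.1 (by simp)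
      obtain ⟨a', b', -⟩ := rho_bound hB hc.tail.1
      have hp := pos hc
      have f := mul_le_mul_of_nonneg_right hs.tail.2.1 hP.le
      have f' := mul_le_mul_of_nonneg_right hc.tail.2.1 hP.le
      rcases lt_trichotomy i j with h | h | h
      · have := lt h
        right; left; rw [rho, lam, rho]; linarith
      · subst h
        rcases c with _ | ⟨j'', c⟩
        · exact absurd rfl (h1 j')
        · have := pos hc.tail.1
          right; left; rw [rho, lam, rho]; linarith
      · have := lt h
        right; right; left
        rw [lam, lam, rho, rho, rho]; constructor <;> linarith
    · left; rw [rho]; exact pos hs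
    · obtain ⟨a, b⟩ := lam_bound hB hs.tail.1 (by simp)
      obtain ⟨a', b', -⟩ := rho_bound hB hs.tail.1
      have f := mul_le_mul_of_nonneg_right hc.tail.2.1 hP.le
      have f' := mul_le_mul_of_nonneg_right hs.tail.2.1 hP.le
      rcases lt_trichotomy j i with h | h | h
      · have := lt h
        left; rw [rho, lam, rho]; linarith
      · subst h
        rcases s with _ | ⟨j'', c⟩
        · exact absurd rfl (h2 i')
        · have := pos hs.tail.1
          left; rw [rho, lam, rho]; linarith
      · have := lt h
        right; right; right
        rw [lam, lam, rho, rho, rho]; constructor <;> linarith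
    · obtain ⟨a, b⟩ := lam_bound hB hs.tail.1 (by simp)
      obtain ⟨a', b', -⟩ := rho_bound hB hs.tail.1
      obtain ⟨a2, b2⟩ := lam_bound hB hc.tail.1 (by simp)
      obtain ⟨a3, b3, -⟩ := rho_bound hB hc.tail.1
      rcases lt_trichotomy j i with h | h | h
      · have := lt h
        left; rw [rho, lam]; linarith
      · subst h
        have := ih hs.tail.1 hc.tail.1 (fun h => hsc (by rw [h])) (fun l h => h1 l (by simp [h]))
          (fun l h => h2 l (by simp [h]))
        simp only [rho, lam] at this ⊢
        rcases this with h | h | h | h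
        · left; linarith
        · right; left; linarith
        · right; right; left; constructor <;> linarith
        · right; right; right; constructor <;> linarith
      · have := lt h
        right; left; rw [rho, lam]; linarith

end

end Chords

end RB

namespace RB

/-! ### A field with independent variables and degree valuations -/

open scoped NNReal

/-- A family of nonzero elements `X t` of a field together with, for each `t`, a valuation `w t`
with `w t (X t) = 2` which is trivial on a subfield `N t` containing all other variables. -/
structure VarData (ι K : Type) [Field K] where
  /-- the variables -/
  X : ι → K
  /-- the degree valuations -/
  w : ι → Valuation K ℝ≥0
  /-- the subfield of elements not involving a given variable -/
  N : ι → Subfield K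
  w_X : ∀ t, w t (X t) = 2
  w_N : ∀ t x, x ∈ N t → x ≠ 0 → w t x = 1
  X_mem : ∀ s t, s ≠ t → X s ∈ N t

section
variable {ι : Type}

open Classical in
/-- The valuation `p ↦ 2 ^ deg_t p` on polynomials. -/
noncomputable def polyVal (t : ι) : Valuation (MvPolynomial ι ℚ) ℝ≥0 where
  toFun p := if p = 0 then 0 else 2 ^ MvPolynomial.degreeOf t p
  map_zero' := by simp
  map_one' := by simp [MvPolynomial.degreeOf_one]
  map_mul' p q := by
    by_cases hp : p = 0
    · simp [hp]
    by_cases hq : q = 0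
    · simp [hq]
    simp [hp, hq, MvPolynomial.degreeOf_mul_eq hp hq, pow_add]
  map_add_le_max' p q := by
    by_cases hp : p = 0
    · simp [hp]
    by_cases hq : q = 0
    · simp [hq]
    by_cases hpq : p + q = 0
    · simp [hpq]
    simp only [hp, hq, hpq, if_false]
    rw [← (pow_right_mono₀ (one_le_two (α := ℝ≥0))).map_max]
    exact pow_le_pow_right₀ one_le_two (MvPolynomial.degreeOf_add_le t p q)

theorem polyVal_apply {t : ι} {p : MvPolynomial ι ℚ} (hp : p ≠ 0) :
    polyVal t p = 2 ^ MvPolynomial.degreeOf t p := if_neg hp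

theorem polyVal_supp (t : ι) :
    nonZeroDivisors (MvPolynomial ι ℚ) ≤ (polyVal t).supp.primeCompl := by
  intro p hp h
  have h0 := nonZeroDivisors.ne_zero hp
  have h1 : polyVal t p = 0 := (Valuation.mem_supp_iff _ _).1 h
  rw [polyVal_apply h0] at h1
  exact absurd h1 (by positivity)

variable (ι) in
theorem exists_varData : ∃ (K : Type) (_ : Field K), Nonempty (VarData ι K) := by
  let P := MvPolynomial ι ℚ
  let K := FractionRing P
  let W : ι → Valuation K ℝ≥0 := fun t => (polyVal t).extendToLocalization (polyVal_supp t) K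
  have hW : ∀ t p, W t (algebraMap P K p) = polyVal t p := fun t p =>
    Valuation.extendToLocalization_apply_map_apply _ _ _ _
  let N : ι → Subfield K := fun t =>
    Subfield.closure (algebraMap P K '' (MvPolynomial.supported ℚ ({t}ᶜ : Set ι) : Set P))
  refine ⟨K, inferInstance, ⟨⟨fun s => algebraMap P K (MvPolynomial.X s), W, N, ?_, ?_, ?_⟩⟩⟩
  · intro t
    rw [hW, polyVal_apply (MvPolynomial.X_ne_zero t), MvPolynomial.degreeOf_X_self]
    simp
  · intro t x hx hx0
    have key : ∀ y ∈ Subring.closure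
        (algebraMap P K '' (MvPolynomial.supported ℚ ({t}ᶜ : Set ι) : Set P)), y ≠ 0 →
        W t y = 1 := by
      intro y hy hy0
      have hle : Subring.closure
          (algebraMap P K '' (MvPolynomial.supported ℚ ({t}ᶜ : Set ι) : Set P)) ≤
          (MvPolynomial.supported ℚ ({t}ᶜ : Set ι)).toSubring.map (algebraMap P K) :=
        Subring.closure_le.2 (by rintro _ ⟨p, hp, rfl⟩; exact ⟨p, hp, rfl⟩)
      obtain ⟨p, hp, rfl⟩ := hle hy
      have hp0 : p ≠ 0 := by rintro rfl; simp at hy0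
      have hp1 : (p.vars : Set ι) ⊆ {t}ᶜ := MvPolynomial.mem_supported.1 hp
      have hp2 : MvPolynomial.degreeOf t p = 0 := by
        classical
        rw [MvPolynomial.degreeOf_def, Multiset.count_eq_zero]
        intro h
        exact hp1 (by simpa [MvPolynomial.vars_def] using h) rfl
      have := hW t p
      rw [polyVal_apply hp0, hp2, pow_zero] at this
      exact this
    obtain ⟨y, hy, z, hz, rfl⟩ := Subfield.mem_closure_iff.1 hx
    have hy0 : y ≠ 0 := by rintro rfl; simp at hx0
    have hz0 : z ≠ 0 := by rintro rfl; simp at hx0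
    rw [map_div₀, key y hy hy0, key z hz hz0, div_one]
  · intro s t hst
    refine Subfield.subset_closure ⟨MvPolynomial.X s, ?_, rfl⟩
    exact (MvPolynomial.X_mem_supported).2 (by simpa using hst)

end

end RB

namespace RB

/-! ### Dynamics on the tree of simple paths -/

open scoped NNReal

set_option linter.unusedSectionVars false

section Dynamics

variable {V : Type} [Fintype V] [DecidableEq V] (Γ : SimpleGraph V)

/-- Nodes of the tree: simple paths of `Γ`, listed from their last vertex to their first one.
The empty path is the root and the children of `t` are the paths `u :: t`. -/
def Nd (t : List V) : Prop := t.Nodup ∧ t.IsChain Γ.Adj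

variable {Γ}

theorem Nd.length_le {t : List V} (h : Nd Γ t) : t.length ≤ Fintype.card V := h.1.length_le_card

theorem Nd.cons {u v : V} {t : List V} (h : Nd Γ (v :: t)) (hu : u ∉ v :: t) (ha : Γ.Adj v u) :
    Nd Γ (u :: v :: t) :=
  ⟨List.nodup_cons.2 ⟨hu, h.1⟩, List.isChain_cons_cons.2 ⟨ha.symm, h.2⟩⟩

variable {K : Type} [Field K] (D : VarData (List V) K)

section Valuations
variable {ι : Type} (D : VarData ι K)

theorem X_ne_zero (s : ι) : D.X s ≠ 0 := by
  intro h; have := D.w_X s; rw [h, map_zero] at this; norm_num at this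

theorem w_zpow (s : ι) (k : ℤ) : D.w s (D.X s ^ k) = 2 ^ k := by rw [map_zpow₀, D.w_X]

theorem w_le_one {s : ι} {x : K} (h : x ∈ D.N s) : D.w s x ≤ 1 := by
  by_cases hx : x = 0
  · simp [hx]
  · exact (D.w_N s x h hx).le

theorem w_zpow_sub_one (s : ι) {k : ℤ} (hk : k ≠ 0) :
    D.w s (D.X s ^ k - 1) = 2 ^ k.toNat := by
  rcases lt_or_gt_of_ne hk with h | h
  · have h1 : D.w s (D.X s ^ k) < D.w s 1 := by
      rw [w_zpow, map_one]; exact zpow_lt_one_of_neg₀ (by norm_num) h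
    rw [Valuation.map_sub_eq_of_lt_right _ h1, map_one, Int.toNat_of_nonpos h.le, pow_zero]
  · have h1 : D.w s 1 < D.w s (D.X s ^ k) := by
      rw [w_zpow, map_one]; exact one_lt_zpow₀ (by norm_num) h
    rw [Valuation.map_sub_eq_of_lt_left _ h1, w_zpow]
    lift k to ℕ using h.le
    simp

theorem X_ne_one (s : ι) : D.X s ≠ 1 := by
  intro h; have := D.w_X s; rw [h, map_one] at this; norm_num at this

/-- The product `(1 - a) (1 - b)` for the colours `a = X⁻¹` and `b = X²` of the two strands of the
chord attached to a node. -/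
def gam (s : ι) : K := (1 - (D.X s)⁻¹) * (1 - D.X s ^ 2)

theorem w_gam (s : ι) : D.w s (gam D s) = 4 := by
  have h1 := w_zpow_sub_one D s (k := -1) (by norm_num)
  have h2 := w_zpow_sub_one D s (k := 2) (by norm_num)
  rw [Valuation.map_sub_swap] at h1 h2
  rw [gam, map_mul, ← zpow_neg_one, h1]
  have : D.X s ^ 2 = D.X s ^ (2 : ℤ) := by norm_cast
  rw [this, h2, show (-1 : ℤ).toNat = 0 from rfl, show (2 : ℤ).toNat = 2 from rfl]
  norm_num

theorem gam_ne_zero (s : ι) : gam D s ≠ 0 := by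
  intro h; have := w_gam D s; rw [h, map_zero] at this; norm_num at this

/-- The coefficient with which the neighbours of a node enter the `k`-th power of its twist. -/
def kap (s : ι) (k : ℤ) : K := (D.X s ^ k - 1) / (D.X s - 1) * gam D s

theorem w_kap (s : ι) {k : ℤ} (hk : k ≠ 0) : D.w s (kap D s k) = 2 ^ (k.toNat + 1) := by
  have h1 := w_zpow_sub_one D s (k := 1) (by norm_num)
  rw [zpow_one] at h1
  rw [kap, map_mul, map_div₀, w_gam, w_zpow_sub_one D s hk, h1, pow_succ]
  have : (4 : ℝ≥0) = 2 * 2 := by norm_num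
  rw [this, show (1 : ℤ).toNat = 1 from rfl, pow_one, div_mul_eq_mul_div, ← mul_assoc,
    mul_div_cancel_right₀ _ two_ne_zero]

theorem gam_mem {s t : ι} (h : s ≠ t) : gam D s ∈ D.N t :=
  mul_mem (sub_mem (one_mem _) (inv_mem (D.X_mem s t h)))
    (sub_mem (one_mem _) (pow_mem (D.X_mem s t h) 2))

theorem kap_mem {s t : ι} (h : s ≠ t) (k : ℤ) : kap D s k ∈ D.N t :=
  mul_mem (div_mem (sub_mem (zpow_mem (D.X_mem s t h) k) (one_mem _))
    (sub_mem (D.X_mem s t h) (one_mem _))) (gam_mem D h)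

end Valuations

open Classical in
/-- The sum of the values of `x` at the children of `s`. -/
noncomputable def ch (Γ : SimpleGraph V) (x : List V → K) (s : List V) : K :=
  ∑ u : V, if Nd Γ (u :: s) then x (u :: s) else 0

theorem ch_add (x y : List V → K) (s : List V) : ch Γ (x + y) s = ch Γ x s + ch Γ y s := by
  simp only [ch, ← Finset.sum_add_distrib]
  exact Finset.sum_congr rfl fun u _ => by split_ifs <;> simp

theorem ch_smul (a : K) (x : List V → K) (s : List V) : ch Γ (a • x) s = a * ch Γ x s := by
  simp only [ch, Finset.mul_sum]
  exact Finset.sum_congr rfl fun u _ => by split_ifs <;> simp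

theorem ch_congr {x y : List V → K} {s : List V} (h : ∀ u, x (u :: s) = y (u :: s)) :
    ch Γ x s = ch Γ y s := by
  simp only [ch, h]

variable (Γ)

open Classical in
/-- The action of the `k`-th power of the simultaneous twist along all nodes with label `v`. -/
noncomputable def step (v : V) (k : ℤ) : Module.End K (List V → K) where
  toFun x s := if s.head? = some v ∧ Nd Γ s then
    D.X s ^ k * x s + kap D s k * (ch Γ x s - x s.tail) else x s
  map_add' x y := by
    funext s
    simp only [Pi.add_apply, ch_add]
    split_ifs
    · ring
    · rfl
  map_smul' a x := by
    funext s
    simp only [Pi.smul_apply, ch_smul, smul_eq_mul, RingHom.id_apply]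
    split_ifs
    · ring
    · rfl

theorem step_pos {v : V} {k : ℤ} {x : List V → K} {s : List V} (h : s.head? = some v)
    (hs : Nd Γ s) : step Γ D v k x s =
      D.X s ^ k * x s + kap D s k * (ch Γ x s - x s.tail) := if_pos ⟨h, hs⟩

theorem step_neg {v : V} {k : ℤ} {x : List V → K} {s : List V} (h : ¬ (s.head? = some v ∧ Nd Γ s)) :
    step Γ D v k x s = x s := if_neg h

/-- The action of a syllable word. -/
noncomputable def run (w : List (V × ℤ)) : Module.End K (List V → K) :=
  (w.map fun p => step Γ D p.1 p.2).prod

theorem run_cons (p : V × ℤ) (w : List (V × ℤ)) (x : List V → K) :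
    run Γ D (p :: w) x = step Γ D p.1 p.2 (run Γ D w x) := by
  simp [run]

theorem run_append (w w' : List (V × ℤ)) (x : List V → K) :
    run Γ D (w ++ w') x = run Γ D w (run Γ D w' x) := by
  simp [run]

theorem run_nil (x : List V → K) : run Γ D [] x = x := by simp [run]

/-- A coordinate only changes under syllables of its own label. -/
theorem run_apply_of_label {Y : List (V × ℤ)} {s : List V}
    (h : ∀ p ∈ Y, s.head? ≠ some p.1) (x : List V → K) : run Γ D Y x s = x s := by
  induction Y with
  | nil => rw [run_nil]
  | cons p Y ih =>
    rw [run_cons, step_neg, ih fun q hq => h q (by simp [hq])]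
    exact fun hh => h p (by simp) hh.1

/-- Evolution is local above a node whose label does not occur. -/
theorem run_local {Z : List (V × ℤ)} {u : V} {t : List V} (hZ : ∀ p ∈ Z, p.1 ≠ u)
    {x y : List V → K} (hxy : ∀ r, u :: t <:+ r → x r = y r) :
    ∀ r, u :: t <:+ r → run Γ D Z x r = run Γ D Z y r := by
  induction Z with
  | nil => simpa only [run_nil] using hxy
  | cons p Z ih =>
    have ih := ih fun q hq => hZ q (by simp [hq])
    intro r hr
    rw [run_cons, run_cons]
    by_cases hp : r.head? = some p.1 ∧ Nd Γ r
    · rw [step_pos Γ D hp.1 hp.2, step_pos Γ D hp.1 hp.2]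
      have h1 : u :: t <:+ r.tail := by
        rcases r with _ | ⟨a, r⟩
        · simp at hp
        · rcases List.suffix_cons_iff.1 hr with h | h
          · have : a = p.1 := by simpa using hp.1
            have := hZ p (by simp)
            simp_all
          · exact h
      rw [ih r hr, ih _ h1, ch_congr fun a => ih (a :: r) (hr.trans (List.suffix_cons a r))]
    · rw [step_neg Γ D hp, step_neg Γ D hp, ih r hr]

/-- The basis vector at a node. -/
abbrev dl (s : List V) : List V → K := Pi.single s 1

theorem not_cons_suffix {u : V} {t : List V} : ¬ u :: t <:+ t := fun h => by
  have := h.length_le; simp at this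

/-- A pulse issued at `u :: t`, as long as the label `u` does not occur, reaches the subtree above a
child `d` in values which involve only variables of nodes above `d`. -/
theorem run_mem_N {Y : List (V × ℤ)} {u : V} {t : List V} (hY : ∀ p ∈ Y, p.1 ≠ u) {a : V}
    {s : List V} (hs : ¬ a :: u :: t <:+ s) :
    ∀ r, a :: u :: t <:+ r → run Γ D Y (dl (u :: t)) r ∈ D.N s := by
  induction Y with
  | nil =>
    intro r hr
    rw [run_nil, dl, Pi.single_eq_of_ne]
    · exact zero_mem _
    · rintro rfl; exact not_cons_suffix hr
  | cons p Y ih =>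
    have hY' : ∀ q ∈ Y, q.1 ≠ u := fun q hq => hY q (by simp [hq])
    have ih := ih hY'
    intro r hr
    rw [run_cons]
    by_cases hp : r.head? = some p.1 ∧ Nd Γ r
    · rw [step_pos Γ D hp.1 hp.2]
      have hrs : r ≠ s := by rintro rfl; exact hs hr
      have h1 : run Γ D Y (dl (u :: t)) r.tail ∈ D.N s := by
        rcases r with _ | ⟨b, r⟩
        · simp at hp
        · rcases List.suffix_cons_iff.1 hr with h | h
          · obtain ⟨-, rfl⟩ := List.cons.inj h
            rw [List.tail_cons, run_apply_of_label]
            · simp [one_mem]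
            · intro q hq h
              exact hY' q hq (by simpa using h.symm)
          · exact ih _ h
      have h2 : ch Γ (run Γ D Y (dl (u :: t))) r ∈ D.N s := by
        refine sum_mem fun b _ => ?_
        split_ifs
        · exact ih _ (hr.trans (List.suffix_cons b r))
        · exact zero_mem _
      exact add_mem (mul_mem (zpow_mem (D.X_mem r s hrs) _) (ih r hr))
        (mul_mem (kap_mem D hrs _) (sub_mem h2 h1))
    · rw [step_neg Γ D hp]; exact ih r hr

/-- The response at a node to a pulse issued by that node. -/
noncomputable def resp (c : List V) (Z : List (V × ℤ)) : K := ch Γ (run Γ D Z (dl c)) c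

theorem resp_mem {u : V} {t : List V} {Z : List (V × ℤ)} (hZ : ∀ p ∈ Z, p.1 ≠ u) :
    resp Γ D (u :: t) Z ∈ D.N (u :: t) := by
  refine sum_mem fun b _ => ?_
  split_ifs
  · exact run_mem_N Γ D hZ not_cons_suffix _ List.suffix_rfl
  · exact zero_mem _

/-- The total weight of the syllables with label `u`, where `u ^ k` has weight `max k 0 + 1`. -/
def vs (u : V) (Y : List (V × ℤ)) : ℕ :=
  (Y.map fun p => if p.1 = u then p.2.toNat + 1 else 0).sum

theorem vs_append (u : V) (Y Z : List (V × ℤ)) : vs u (Y ++ Z) = vs u Y + vs u Z := by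
  simp [vs]

theorem vs_of_notMem {u : V} {Y : List (V × ℤ)} (h : ∀ p ∈ Y, p.1 ≠ u) : vs u Y = 0 := by
  induction Y with
  | nil => simp [vs]
  | cons p Y ih =>
    have h1 := ih fun q hq => h q (by simp [hq])
    simp only [vs, List.map_cons, List.sum_cons] at h1 ⊢
    rw [h1, if_neg (h p (by simp))]

theorem vs_cons_self (u : V) (k : ℤ) (Y : List (V × ℤ)) :
    vs u ((u, k) :: Y) = k.toNat + 1 + vs u Y := by
  simp [vs]

/-- The first occurrence of a label. -/
theorem exists_first {u : V} {Y : List (V × ℤ)} (h : ∃ p ∈ Y, p.1 = u) :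
    ∃ Z k Y', Y = Z ++ (u, k) :: Y' ∧ ∀ p ∈ Z, p.1 ≠ u := by
  induction Y with
  | nil => simp at h
  | cons p Y ih =>
    by_cases hp : p.1 = u
    · exact ⟨[], p.2, Y, by simp [← hp], by simp⟩
    · obtain ⟨q, hq, hqu⟩ := h
      obtain ⟨Z, k, Y', rfl, hZ⟩ := ih ⟨q, by
        rcases List.mem_cons.1 hq with rfl | h
        · exact absurd hqu hp
        · exact h, hqu⟩
      refine ⟨p :: Z, k, Y', rfl, ?_⟩
      intro r hr
      rcases List.mem_cons.1 hr with rfl | h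
      · exact hp
      · exact hZ r h

theorem head_ne {t : List V} {v : V} (h : v ∉ t) : t.head? ≠ some v := fun e =>
  h (List.mem_of_mem_head? e)

/-- The growth lemma. A reduced word starting with a syllable of label `u`, applied to the basis
vector of the parent `t` of `u :: t`, produces at `u :: t` a coordinate of valuation exactly
`2 ^ vs u Y`, and to leading order everything above `u :: t` is the response to that coordinate. -/
theorem growth (n : ℕ) : ∀ (u : V) (t : List V), Nd Γ (u :: t) →
    Fintype.card V < (u :: t).length + n → ∀ (k : ℤ) (Y : List (V × ℤ)),
    Red Γ ((u, k) :: Y) → (∀ p ∈ (u, k) :: Y, p.1 ∉ t) →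
    D.w (u :: t) (run Γ D ((u, k) :: Y) (dl t) (u :: t)) = 2 ^ vs u ((u, k) :: Y) ∧
    ∀ Z : List (V × ℤ), (∀ p ∈ Z, p.1 ∉ u :: t) →
      D.w (u :: t) (ch Γ (run Γ D Z (run Γ D ((u, k) :: Y) (dl t))) (u :: t) -
        run Γ D ((u, k) :: Y) (dl t) (u :: t) * resp Γ D (u :: t) Z) <
      D.w (u :: t) (run Γ D ((u, k) :: Y) (dl t) (u :: t)) := by
  induction n with
  | zero => intro u t hc hlt; have := hc.length_le; omega
  | succ n ihn =>
  intro u t hc hlt k Y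
  induction hN : Y.length using Nat.strong_induction_on generalizing k Y with
  | _ N ihN =>
  intro hred hlab
  have hk : k ≠ 0 := hred.1 (u, k) (by simp)
  have hut : u ∉ t := (List.nodup_cons.1 hc.1).1
  have hYt : ∀ p ∈ Y, p.1 ∉ t := fun p hp => hlab p (by simp [hp])
  -- nothing above `u :: t` of label `u` is a node
  have hno : ∀ r, u :: t <:+ r → r ≠ u :: t → ¬ (r.head? = some u ∧ Nd Γ r) := by
    rintro r hr hne ⟨h1, h2⟩
    rcases r with _ | ⟨a, r⟩
    · simp at h1
    · rcases List.suffix_cons_iff.1 hr with h | h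
      · exact hne h.symm
      · have : a = u := by simpa using h1
        subst this
        exact (List.nodup_cons.1 h2.1).1 (h.subset (by simp))
  by_cases hu : ∃ p ∈ Y, p.1 = u
  · obtain ⟨Z0, k', Y'', rfl, hZ0⟩ := exists_first hu
    have hred1 : Red Γ ((u, k') :: Y'') := hred.middle (A := (u, k) :: Z0) (B := []) (by simp)
    obtain ⟨e1, err1⟩ := ihN Y''.length (by simp at hN; omega) k' Y'' rfl hred1
      (fun p hp => hYt p (by simp only [List.mem_append]; exact Or.inr hp))
    have hZ0c : ∀ p ∈ Z0, p.1 ∉ u :: t := fun p hp h => by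
      rcases List.mem_cons.1 h with h | h
      · exact hZ0 p hp h
      · exact hYt p (by simp [hp]) h
    -- the response to the last excursion of `u` is nonzero
    have hG : resp Γ D (u :: t) Z0 ≠ 0 := by
      classical
      obtain ⟨p, hp, hadj⟩ := hred.2 [] u k Z0 k' Y'' (by simp)
      obtain ⟨Z1, k1, Y1, rfl, hZ1⟩ := exists_first ⟨p, hp, rfl⟩
      have hd : Nd Γ (p.1 :: u :: t) := hc.cons (hZ0c p hp) hadj
      have hr1 : Red Γ ((p.1, k1) :: Y1) :=
        hred.middle (A := (u, k) :: Z1) (B := (u, k') :: Y'') (by simp)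
      obtain ⟨g1, -⟩ := ihn p.1 (u :: t) hd (by simp at hlt ⊢; omega) k1 Y1 hr1
        (fun q hq => hZ0c q (by simp only [List.mem_append]; exact Or.inr hq))
      intro h0
      have hsum := Finset.add_sum_erase Finset.univ (fun a : V => if Nd Γ (a :: u :: t) then
        run Γ D (Z1 ++ (p.1, k1) :: Y1) (dl (u :: t)) (a :: u :: t) else 0) (Finset.mem_univ p.1)
      have hrest : (∑ a ∈ Finset.univ.erase p.1, if Nd Γ (a :: u :: t) then
          run Γ D (Z1 ++ (p.1, k1) :: Y1) (dl (u :: t)) (a :: u :: t) else 0) ∈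
          D.N (p.1 :: u :: t) := by
        refine sum_mem fun a ha => ?_
        split_ifs
        · refine run_mem_N Γ D hZ0 ?_ _ List.suffix_rfl
          intro hs
          have := hs.eq_of_length (by simp)
          simp only [List.cons.injEq] at this
          exact (Finset.mem_erase.1 ha).1 this.1
        · exact zero_mem _
      have hw := w_le_one D hrest
      have h2 : resp Γ D (u :: t) (Z1 ++ (p.1, k1) :: Y1) = ∑ a : V, if Nd Γ (a :: u :: t) then
        run Γ D (Z1 ++ (p.1, k1) :: Y1) (dl (u :: t)) (a :: u :: t) else 0 := by
        simp only [resp, ch]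
      have hZ1' : ∀ q ∈ Z1, (p.1 :: u :: t).head? ≠ some q.1 := fun q hq h =>
        hZ1 q hq (by simpa using h.symm)
      have hg : run Γ D (Z1 ++ (p.1, k1) :: Y1) (dl (u :: t)) (p.1 :: u :: t) =
          run Γ D ((p.1, k1) :: Y1) (dl (u :: t)) (p.1 :: u :: t) := by
        rw [run_append, run_apply_of_label Γ D hZ1']
      rw [h0, ← hsum, if_pos hd, hg] at h2
      · have h3 := eq_neg_of_add_eq_zero_right h2.symm
        rw [h3, Valuation.map_neg, g1, vs_cons_self] at hw
        have : (1 : ℝ≥0) < 2 ^ (k1.toNat + 1 + vs p.1 Y1) :=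
          one_lt_pow₀ (by norm_num) (by omega)
        exact absurd hw (not_le.2 this)
    have hG1 : D.w (u :: t) (resp Γ D (u :: t) Z0) = 1 := D.w_N _ _ (resp_mem Γ D hZ0) hG
    have herr := err1 Z0 hZ0c
    have hx1t : run Γ D ((u, k') :: Y'') (dl t) t = 1 := by
      rw [run_apply_of_label]
      · simp
      · exact fun p hp => head_ne (hYt p (by simp only [List.mem_append]; exact Or.inr hp))
    rw [run_cons, run_append]
    set x1 := run Γ D ((u, k') :: Y'') (dl t) with hx1
    set y := run Γ D Z0 x1 with hy
    have hyc : y (u :: t) = x1 (u :: t) :=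
      run_apply_of_label Γ D (fun p hp h => hZ0 p hp (by simpa using h.symm)) x1
    have hyt : y t = 1 := by
      rw [hy, run_apply_of_label Γ D, hx1t]
      exact fun p hp => head_ne (hYt p (by simp [hp]))
    have hxc : step Γ D u k y (u :: t) =
        D.X (u :: t) ^ k * x1 (u :: t) + kap D (u :: t) k * (ch Γ y (u :: t) - 1) := by
      rw [step_pos Γ D rfl hc, hyc, List.tail_cons, hyt]
    have hgt : 1 < D.w (u :: t) (x1 (u :: t)) := by
      rw [e1, vs_cons_self]; exact one_lt_pow₀ (by norm_num) (by omega)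
    have hpos : 0 < D.w (u :: t) (x1 (u :: t)) := zero_lt_one.trans hgt
    have hwch : D.w (u :: t) (ch Γ y (u :: t) - 1) = D.w (u :: t) (x1 (u :: t)) := by
      set G := resp Γ D (u :: t) Z0
      have h1 : D.w (u :: t) (x1 (u :: t) * G) = D.w (u :: t) (x1 (u :: t)) := by
        rw [map_mul, hG1, mul_one]
      have h2 : ch Γ y (u :: t) - 1 =
          x1 (u :: t) * G + ((ch Γ y (u :: t) - x1 (u :: t) * G) - 1) := by ring
      rw [h2, Valuation.map_add_eq_of_lt_left, h1]
      rw [h1]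
      exact (Valuation.map_sub _ _ _).trans_lt (max_lt herr (by rwa [map_one]))
    have hxw : D.w (u :: t) (step Γ D u k y (u :: t)) =
        2 ^ (k.toNat + 1) * D.w (u :: t) (x1 (u :: t)) := by
      rw [hxc, Valuation.map_add_eq_of_lt_right, map_mul, w_kap D _ hk, hwch]
      rw [map_mul, map_mul, w_kap D _ hk, hwch, w_zpow]
      refine mul_lt_mul_of_pos_right ?_ hpos
      rw [← zpow_natCast]
      exact zpow_lt_zpow_right₀ (by norm_num) (by push_cast; omega)
    have hlt1 : D.w (u :: t) (x1 (u :: t)) < D.w (u :: t) (step Γ D u k y (u :: t)) := by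
      rw [hxw]
      exact lt_mul_of_one_lt_left hpos (one_lt_pow₀ (by norm_num) (by omega))
    refine ⟨?_, fun Z hZ => lt_of_le_of_lt ?_ hlt1⟩
    · show D.w (u :: t) (step Γ D u k y (u :: t)) = _
      rw [hxw, e1, ← pow_add, vs_cons_self u k, vs_append, vs_of_notMem hZ0, zero_add]
    · show D.w (u :: t) (ch Γ (run Γ D Z (step Γ D u k y)) (u :: t) -
        step Γ D u k y (u :: t) * resp Γ D (u :: t) Z) ≤ _
      have hZu : ∀ p ∈ Z, p.1 ≠ u := fun p hp h => hZ p hp (by simp [h])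
      -- above `u :: t` the last syllable only changes the coordinate at `u :: t`
      have hloc := run_local Γ D hZu (t := t) (x := step Γ D u k y)
        (y := y + (step Γ D u k y (u :: t) - x1 (u :: t)) • dl (u :: t)) (by
          intro r hr
          by_cases hrc : r = u :: t
          · subst hrc; simp [hyc]
          · rw [step_neg Γ D (hno r hr hrc)]
            simp [Pi.single_eq_of_ne hrc])
      rw [ch_congr fun a => hloc (a :: u :: t) (List.suffix_cons a _), map_add, map_smul, ch_add,
        ch_smul]
      have hG' := resp_mem Γ D hZu (t := t)
      have hZZ : ∀ p ∈ Z ++ Z0, p.1 ∉ u :: t := by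
        intro p hp
        rcases List.mem_append.1 hp with h | h
        · exact hZ p h
        · exact hZ0c p h
      have hG'' := resp_mem Γ D (Z := Z ++ Z0) (u := u) (t := t)
        (fun p hp h => hZZ p hp (by simp [h]))
      have herr' := err1 (Z ++ Z0) hZZ
      rw [run_append] at herr'
      have e : ch Γ (run Γ D Z y) (u :: t) + (step Γ D u k y (u :: t) - x1 (u :: t)) *
          ch Γ (run Γ D Z (dl (u :: t))) (u :: t) -
          step Γ D u k y (u :: t) * resp Γ D (u :: t) Z =
          (ch Γ (run Γ D Z y) (u :: t) - x1 (u :: t) * resp Γ D (u :: t) (Z ++ Z0)) +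
          x1 (u :: t) * (resp Γ D (u :: t) (Z ++ Z0) - resp Γ D (u :: t) Z) := by
        simp only [resp]; ring
      rw [e]
      refine (Valuation.map_add _ _ _).trans (max_le herr'.le ?_)
      rw [map_mul]
      exact mul_le_of_le_one_right' (w_le_one D (sub_mem hG'' hG'))
  · push Not at hu
    have hx1 : ∀ r, u :: t <:+ r → run Γ D Y (dl t) r = 0 := by
      intro r hr
      have := run_local Γ D hu (t := t) (x := dl t) (y := 0) (by
        intro r hr
        rw [dl, Pi.single_eq_of_ne]
        · rfl
        · rintro rfl; exact not_cons_suffix hr) r hr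
      rw [this, map_zero]; rfl
    have hx1t : run Γ D Y (dl t) t = 1 := by
      rw [run_apply_of_label]
      · simp
      · exact fun p hp => head_ne (hYt p hp)
    have hx : ∀ r, u :: t <:+ r → run Γ D ((u, k) :: Y) (dl t) r =
        (-kap D (u :: t) k • dl (u :: t)) r := by
      intro r hr
      rw [run_cons]
      by_cases hrc : r = u :: t
      · subst hrc
        have : ch Γ (run Γ D Y (dl t)) (u :: t) = 0 := by
          refine Finset.sum_eq_zero fun a _ => ?_
          split_ifs
          · exact hx1 _ (List.suffix_cons a _)
          · rfl
        rw [step_pos Γ D rfl hc, this, hx1 _ List.suffix_rfl, List.tail_cons]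
        simp [hx1t]
      · rw [step_neg Γ D (hno r hr hrc), hx1 r hr]
        simp [Pi.single_eq_of_ne hrc]
    have hxc : run Γ D ((u, k) :: Y) (dl t) (u :: t) = -kap D (u :: t) k := by
      rw [hx _ List.suffix_rfl]; simp
    have hw : D.w (u :: t) (run Γ D ((u, k) :: Y) (dl t) (u :: t)) = 2 ^ (k.toNat + 1) := by
      rw [hxc, Valuation.map_neg, w_kap D _ hk]
    refine ⟨?_, fun Z hZ => ?_⟩
    · rw [hw, vs_cons_self, vs_of_notMem hu, add_zero]
    · have hZu : ∀ p ∈ Z, p.1 ≠ u := fun p hp h => hZ p hp (by simp [h])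
      have hloc := run_local Γ D hZu hx
      rw [ch_congr fun a => hloc (a :: u :: t) (List.suffix_cons a _), map_smul, ch_smul, hw, hxc,
        resp, sub_self, map_zero]
      positivity

/-- The coordinate at the one-vertex path `[v]` of the vector obtained from the root. -/
theorem growth_root {w : List (V × ℤ)} (hw : Red Γ w) {v : V} (hv : ∃ p ∈ w, p.1 = v) :
    D.w [v] (run Γ D w (dl []) [v]) = 2 ^ vs v w := by
  obtain ⟨Z, k, Y, rfl, hZ⟩ := exists_first hv
  have hr : Red Γ ((v, k) :: Y) := hw.middle (A := Z) (B := []) (by simp)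
  have := (growth Γ D (Fintype.card V) v [] ⟨by simp, by simp⟩ (by simp) k Y hr (by simp)).1
  rw [run_append, run_apply_of_label, this, vs_append, vs_of_notMem hZ, zero_add]
  intro p hp h
  exact hZ p hp (by simpa using h.symm)

end Dynamics

end RB

namespace RB

/-! ### The homomorphism to the braid group -/

set_option linter.unusedSectionVars false

section Positions

variable {V : Type} [Fintype V] [DecidableEq V]

/-- A numbering of the vertices by `1, …, m`. -/
noncomputable def idx (v : V) : ℕ := (Fintype.equivFin V v : ℕ) + 1

theorem idx_inj : Function.Injective (idx (V := V)) := fun u v h => by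
  simpa [idx, Fin.val_inj] using h

/-- The address of a node: the numbers of its vertices, first vertex first. -/
noncomputable def addr (c : List V) : List ℕ := (c.map idx).reverse

theorem addr_cons (u : V) (t : List V) : addr (u :: t) = addr t ++ [idx u] := by simp [addr]

theorem addr_inj : Function.Injective (addr (V := V)) := fun _ _ h =>
  (List.map_injective_iff.2 idx_inj) (List.reverse_injective h)

theorem addr_eq_append {c s : List V} {j : ℕ} (h : addr c = addr s ++ [j]) : ∃ u, c = u :: s := by
  cases c with
  | nil => simp [addr] at h
  | cons u t =>
    rw [addr_cons] at h
    exact ⟨u, by rw [addr_inj (List.append_inj' h rfl).1]⟩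

variable (V) in
/-- The base of the positional system placing the chords. -/
def base : ℤ := 2 * (Fintype.card V : ℤ) + 2

variable (V) in
/-- The number of strands. -/
def strands : ℕ := 2 * (2 * Fintype.card V + 2) ^ Fintype.card V + 1

/-- The position of the left end of the chord of a node. -/
noncomputable def lN (c : List V) : ℕ :=
  (lam (base V) (Fintype.card V) (addr c) + base V ^ Fintype.card V).toNat

/-- The position of the right end of the chord of a node. -/
noncomputable def rN (c : List V) : ℕ :=
  (rho (base V) (Fintype.card V) (addr c) + base V ^ Fintype.card V).toNat

variable {Γ : SimpleGraph V}

theorem Nd.tail {u : V} {t : List V} (h : Nd Γ (u :: t)) : Nd Γ t :=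
  ⟨(List.nodup_cons.1 h.1).2, h.2.tail⟩

theorem Nd.adr {c : List V} (h : Nd Γ c) : Adr (Fintype.card V) (Fintype.card V) (addr c) := by
  refine ⟨by simpa [addr] using h.length_le, fun i hi => ?_⟩
  simp only [addr, List.mem_reverse, List.mem_map] at hi
  obtain ⟨v, -, rfl⟩ := hi
  have := (Fintype.equivFin V v).isLt
  simp only [idx]; omega

theorem lN_cast {c : List V} (h : Nd Γ c) :
    (lN c : ℤ) = lam (base V) (Fintype.card V) (addr c) + base V ^ Fintype.card V := by
  have := lam_ge rfl h.adr
  exact Int.toNat_of_nonneg (by simp only [base] at *; linarith)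

theorem rN_cast {c : List V} (h : Nd Γ c) :
    (rN c : ℤ) = rho (base V) (Fintype.card V) (addr c) + base V ^ Fintype.card V := by
  have := (rho_bound rfl h.adr).1
  have : 0 ≤ base V ^ Fintype.card V := pow_nonneg (by simp only [base]; positivity) _
  exact Int.toNat_of_nonneg (by simp only [base] at *; linarith)

theorem lN_lt_rN {c : List V} (h : Nd Γ c) : lN c < rN c := by
  have := lam_lt_rho (B := base V) rfl h.adr
  zify; rw [lN_cast h, rN_cast h]; linarith

theorem rN_lt {c : List V} (h : Nd Γ c) : rN c < strands V := by
  have h1 := (rho_bound (B := base V) rfl h.adr).2.1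
  have h2 := (rho_bound (B := base V) rfl h.adr).1
  zify; rw [rN_cast h]
  have : (strands V : ℤ) = 2 * base V ^ Fintype.card V + 1 := by simp [strands, base]
  rw [this]; linarith

theorem pos_cross {u : V} {t : List V} (h : Nd Γ (u :: t)) :
    lN t < lN (u :: t) ∧ lN (u :: t) < rN t ∧ rN t < rN (u :: t) := by
  have := chord_cross (B := base V) rfl (addr_cons u t ▸ h.adr)
  rw [← addr_cons] at this
  zify
  rw [lN_cast h, rN_cast h, lN_cast h.tail, rN_cast h.tail]
  refine ⟨?_, ?_, ?_⟩ <;> linarith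

theorem pos_not_cross {s c : List V} (hs : Nd Γ s) (hc : Nd Γ c) (hsc : s ≠ c)
    (h1 : ∀ u, c ≠ u :: s) (h2 : ∀ u, s ≠ u :: c) :
    rN c < lN s ∨ rN s < lN c ∨ (lN s < lN c ∧ rN c < rN s) ∨ (lN c < lN s ∧ rN s < rN c) := by
  have := chord_not_cross (B := base V) rfl hs.adr hc.adr (fun h => hsc (addr_inj h))
    (fun j h => (addr_eq_append h).elim fun u hu => h1 u hu)
    (fun j h => (addr_eq_append h).elim fun u hu => h2 u hu)
  zify
  rw [lN_cast hs, rN_cast hs, lN_cast hc, rN_cast hc]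
  simpa using this

/-- Chords of distinct nodes have no common end. -/
theorem pos_ne {s c : List V} (hs : Nd Γ s) (hc : Nd Γ c) (hsc : s ≠ c) :
    lN c ≠ lN s ∧ lN c ≠ rN s ∧ rN c ≠ lN s ∧ rN c ≠ rN s := by
  have a := lN_lt_rN hs
  have b := lN_lt_rN hc
  by_cases h1 : ∃ u, c = u :: s
  · obtain ⟨u, rfl⟩ := h1
    have := pos_cross hc
    omega
  by_cases h2 : ∃ u, s = u :: c
  · obtain ⟨u, rfl⟩ := h2
    have := pos_cross hs
    omega
  push Not at h1 h2
  have := pos_not_cross hs hc hsc h1 h2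
  omega

/-- The twist attached to a node. -/
noncomputable def T (s : List V) : BraidGroup (strands V) := twc (strands V) (lN s) (rN s)

theorem commute_T {s c : List V} (hs : Nd Γ s) (hc : Nd Γ c)
    (h1 : ∀ u, c ≠ u :: s) (h2 : ∀ u, s ≠ u :: c) : Commute (T s) (T c) := by
  by_cases hsc : s = c
  · subst hsc; exact Commute.refl _
  have a := lN_lt_rN hs
  have b := lN_lt_rN hc
  rcases pos_not_cross hs hc hsc h1 h2 with h | h | h | h
  · exact (commute_twc_of_disjoint b h a).symm
  · exact commute_twc_of_disjoint a h b
  · exact commute_twc_of_nested (rN_lt hs) h.1 b h.2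
  · exact (commute_twc_of_nested (rN_lt hc) h.1 a h.2).symm

theorem finite_nd (Γ : SimpleGraph V) : {t : List V | Nd Γ t}.Finite :=
  (List.finite_length_le V (Fintype.card V)).subset fun _ h => Nd.length_le h

/-- The set of nodes. -/
noncomputable def nodes (Γ : SimpleGraph V) : Finset (List V) := (finite_nd Γ).toFinset

@[simp] theorem mem_nodes {s : List V} : s ∈ nodes Γ ↔ Nd Γ s := by simp [nodes]

/-- The nodes with label `v`, in some order. -/
noncomputable def nodesOf (Γ : SimpleGraph V) (v : V) : List (List V) :=
  ((nodes Γ).filter fun s => s.head? = some v).toList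

@[simp] theorem mem_nodesOf {v : V} {s : List V} :
    s ∈ nodesOf Γ v ↔ Nd Γ s ∧ s.head? = some v := by simp [nodesOf]

theorem commute_T_of_label {u v : V} (huv : ¬ Γ.Adj u v) {s c : List V} (hs : s ∈ nodesOf Γ u)
    (hc : c ∈ nodesOf Γ v) : Commute (T s) (T c) := by
  rw [mem_nodesOf] at hs hc
  -- the labels of a node and its child are adjacent
  have key : ∀ {a b : V} {p q : List V}, Nd Γ q → p.head? = some a → q.head? = some b →
      ¬ Γ.Adj a b → ∀ x, q ≠ x :: p := by
    rintro a b p q hq hp hqb hab x rfl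
    cases p with
    | nil => simp at hp
    | cons a' p =>
      simp only [List.head?_cons, Option.some.injEq] at hp hqb
      subst hp hqb
      exact hab (List.isChain_cons_cons.1 hq.2).1.symm
  exact commute_T hs.1 hc.1 (key hc.1 hs.2 hc.2 huv)
    (key hs.1 hc.2 hs.2 fun h => huv h.symm)

/-- The image of the generator `v`: the product of the twists of all nodes with label `v`. -/
noncomputable def img (Γ : SimpleGraph V) (v : V) : BraidGroup (strands V) :=
  ((nodesOf Γ v).map T).prod

theorem commute_img {u v : V} (huv : ¬ Γ.Adj u v) : Commute (img Γ u) (img Γ v) := by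
  refine Commute.list_prod_left _ _ fun x hx => Commute.list_prod_right _ _ fun y hy => ?_
  obtain ⟨s, hs, rfl⟩ := List.mem_map.1 hx
  obtain ⟨c, hc, rfl⟩ := List.mem_map.1 hy
  exact commute_T_of_label huv hs hc

theorem zpow_prod_T {v : V} {l : List (List V)} (hl : ∀ s ∈ l, s ∈ nodesOf Γ v) (k : ℤ) :
    (l.map T).prod ^ k = (l.map fun s => T s ^ k).prod := by
  induction l with
  | nil => simp
  | cons s l ih =>
    have h : Commute (T s) (l.map T).prod := Commute.list_prod_right _ _ fun y hy => by
      obtain ⟨c, hc, rfl⟩ := List.mem_map.1 hy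
      exact commute_T_of_label Γ.irrefl (hl s (by simp)) (hl c (by simp [hc]))
    rw [List.map_cons, List.prod_cons, h.mul_zpow, ih fun c hc => hl c (by simp [hc]),
      List.map_cons, List.prod_cons]

theorem img_mem_ker {π : BraidGroup (strands V) →* Equiv.Perm (Fin (strands V))}
    (hπ : ∀ i : Fin (strands V - 1), π (braidGen (strands V) i) = sw (strands V) i) (v : V) :
    img Γ v ∈ π.ker :=
  π.ker.list_prod_mem fun x hx => by
    obtain ⟨s, -, rfl⟩ := List.mem_map.1 hx
    exact tw_mem_ker hπ _ _

theorem exists_hom {π : BraidGroup (strands V) →* Equiv.Perm (Fin (strands V))}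
    (hπ : ∀ i : Fin (strands V - 1), π (braidGen (strands V) i) = sw (strands V) i) :
    ∃ f : Raag Γ →* π.ker, ∀ v, (f (Raag.of Γ v) : BraidGroup (strands V)) = img Γ v := by
  let F : V → π.ker := fun v => ⟨img Γ v, img_mem_ker hπ v⟩
  have h : ∀ r ∈ raagRels Γ, FreeGroup.lift F r = 1 := by
    rintro r ⟨u, v, -, huv, rfl⟩
    simp only [map_mul, map_inv, FreeGroup.lift_apply_of]
    rw [mul_inv_eq_one, mul_inv_eq_iff_eq_mul]
    exact Subtype.ext (commute_img huv).eq
  exact ⟨PresentedGroup.toGroup h, fun v => congrArg Subtype.val (PresentedGroup.toGroup.of h)⟩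

theorem strands_le (h : 2 ≤ Fintype.card V) :
    strands V ≤ 2 ^ 2 ^ Fintype.card V ^ 2 := by
  rw [strands]
  generalize Fintype.card V = m at *
  have h1 : 2 * m + 2 ≤ 2 ^ (m + 1) := by
    have := Nat.lt_two_pow_self (n := m)
    rw [pow_succ]; omega
  have h2 : (2 * m + 2) ^ m ≤ 2 ^ ((m + 1) * m) := by
    rw [pow_mul]; exact Nat.pow_le_pow_left h1 m
  have h3 : 2 * (2 * m + 2) ^ m + 1 ≤ 2 ^ ((m + 1) * m + 2) := by
    rw [pow_add]
    have := Nat.one_le_two_pow (n := (m + 1) * m)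
    omega
  refine h3.trans (Nat.pow_le_pow_right (by norm_num) ?_)
  obtain ⟨j, rfl⟩ : ∃ j, m = j + 2 := ⟨m - 2, by omega⟩
  have h4 : ∀ q : ℕ, 4 ≤ q → q ^ 2 ≤ 2 ^ q := by
    intro q hq
    induction q, hq using Nat.le_induction with
    | base => norm_num
    | succ q hq ih => rw [pow_succ 2 q]; nlinarith
  rcases Nat.eq_zero_or_pos j with rfl | hj
  · norm_num
  · have := h4 ((j + 2) ^ 2) (by nlinarith)
    have h5 : (j + 2 + 1) * (j + 2) + 2 ≤ 2 * (j + 2) ^ 2 := by nlinarith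
    have h6 : 2 * (j + 2) ^ 2 ≤ ((j + 2) ^ 2) ^ 2 := by
      rw [pow_two ((j + 2) ^ 2)]; exact Nat.mul_le_mul_right _ (by nlinarith)
    omega

end Positions

end RB

namespace RB

/-! ### The orbit of the root vector under the Burau representation -/

open scoped NNReal

section Equivariance

variable {V : Type} [Fintype V] [DecidableEq V] {Γ : SimpleGraph V} {K : Type} [Field K]
  {D : VarData (List V) K} {τ : ℕ → Kˣ}

/-- The colouring `τ` gives the ends of the chord of the node `s` the colours `X⁻¹` and `X²`, where
`X` is the variable of `s`. -/
def Col (Γ : SimpleGraph V) (D : VarData (List V) K) (τ : ℕ → Kˣ) : Prop :=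
  ∀ s, Nd Γ s → (τ (lN s) : K) = (D.X s)⁻¹ ∧ (τ (rN s) : K) = D.X s ^ 2

theorem phi_self (hτ : Col Γ D τ) {s : List V} (hs : Nd Γ s) :
    phi (lN s) (rN s) τ (Ev (lN s) (rN s) τ) = D.X s - 1 := by
  have := X_ne_zero D s
  rw [phi_Ev_self (lN_lt_rN hs), (hτ s hs).1, (hτ s hs).2]
  field_simp

theorem phi_other (hτ : Col Γ D τ) {s c : List V} (hs : Nd Γ s) (hc : Nd Γ c) (hsc : s ≠ c) :
    phi (lN s) (rN s) τ (Ev (lN c) (rN c) τ) = gam D c *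
      ((if lN c ∈ Finset.Ioo (lN s) (rN s) then 1 else 0) -
        (if rN c ∈ Finset.Ioo (lN s) (rN s) then 1 else 0)) := by
  obtain ⟨h1, h2, h3, h4⟩ := pos_ne hs hc hsc
  rw [phi_Ev τ (lN_lt_rN hc).ne h1 h2 h3 h4, (hτ c hc).1, (hτ c hc).2, gam]

theorem phi_child (hτ : Col Γ D τ) {u : V} {t : List V} (h : Nd Γ (u :: t)) :
    phi (lN t) (rN t) τ (Ev (lN (u :: t)) (rN (u :: t)) τ) = gam D (u :: t) := by
  rw [phi_other hτ h.tail h (List.cons_ne_self u t).symm]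
  have := pos_cross h
  simp only [Finset.mem_Ioo]
  rw [if_pos (by omega), if_neg (by omega), sub_zero, mul_one]

theorem phi_parent (hτ : Col Γ D τ) {u : V} {t : List V} (h : Nd Γ (u :: t)) :
    phi (lN (u :: t)) (rN (u :: t)) τ (Ev (lN t) (rN t) τ) = -gam D t := by
  rw [phi_other hτ h h.tail (List.cons_ne_self u t)]
  have := pos_cross h
  simp only [Finset.mem_Ioo]
  rw [if_neg (by omega), if_pos (by omega), zero_sub, mul_neg, mul_one]

theorem phi_far (hτ : Col Γ D τ) {s c : List V} (hs : Nd Γ s) (hc : Nd Γ c) (hsc : s ≠ c)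
    (h1 : ∀ u, c ≠ u :: s) (h2 : ∀ u, s ≠ u :: c) :
    phi (lN s) (rN s) τ (Ev (lN c) (rN c) τ) = 0 := by
  rw [phi_other hτ hs hc hsc]
  have := pos_not_cross hs hc hsc h1 h2
  have := lN_lt_rN hs
  have := lN_lt_rN hc
  obtain ⟨h1, h2, h3, h4⟩ := pos_ne hs hc hsc
  simp only [Finset.mem_Ioo]
  by_cases h : lN s < lN c ∧ lN c < rN s
  · rw [if_pos h, if_pos (by omega), sub_self, mul_zero]
  · rw [if_neg h, if_neg (by omega), sub_self, mul_zero]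

/-- The vector of the Burau representation attached to a function on the nodes. -/
noncomputable def Lv (Γ : SimpleGraph V) (D : VarData (List V) K) (τ : ℕ → Kˣ) (x : List V → K) :
    ℕ → K :=
  ∑ s ∈ nodes Γ, (x s * (gam D s)⁻¹) • Ev (lN s) (rN s) τ

theorem Lv_congr {x y : List V → K} (h : ∀ s, Nd Γ s → x s = y s) : Lv Γ D τ x = Lv Γ D τ y :=
  Finset.sum_congr rfl fun s hs => by rw [h s (mem_nodes.1 hs)]

theorem Lv_add (x y : List V → K) : Lv Γ D τ (x + y) = Lv Γ D τ x + Lv Γ D τ y := by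
  simp only [Lv, Pi.add_apply, add_mul, add_smul, Finset.sum_add_distrib]

theorem Lv_smul_dl {s : List V} (hs : Nd Γ s) (b : K) :
    Lv Γ D τ (b • dl s) = (b * (gam D s)⁻¹) • Ev (lN s) (rN s) τ := by
  rw [Lv, Finset.sum_eq_single s]
  · simp
  · intro c _ hc
    simp [Pi.single_eq_of_ne hc]
  · intro h; simp [hs] at h

/-- The transvection form of a node sees that node, its children and its parent. -/
theorem phi_Lv (hτ : Col Γ D τ) {u : V} {t : List V} (h : Nd Γ (u :: t)) (x : List V → K) :
    phi (lN (u :: t)) (rN (u :: t)) τ (Lv Γ D τ x) =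
      x (u :: t) * (gam D (u :: t))⁻¹ * (D.X (u :: t) - 1) + ch Γ x (u :: t) - x t := by
  classical
  have key : ∀ c ∈ nodes Γ, phi (lN (u :: t)) (rN (u :: t)) τ
      ((x c * (gam D c)⁻¹) • Ev (lN c) (rN c) τ) =
      (if c = u :: t then x c * (gam D c)⁻¹ * (D.X c - 1) else 0) +
      (∑ a : V, if c = a :: u :: t then x c else 0) - (if c = t then x c else 0) := by
    intro c hc
    rw [mem_nodes] at hc
    rw [map_smul, smul_eq_mul]
    have hg := gam_ne_zero D c
    by_cases h1 : c = u :: t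
    · subst h1
      rw [phi_self hτ hc, if_pos rfl, if_neg (List.cons_ne_self u t), Finset.sum_eq_zero]
      · ring
      · intro a _
        rw [if_neg (List.cons_ne_self a _).symm]
    by_cases h2 : ∃ a, c = a :: u :: t
    · obtain ⟨a, rfl⟩ := h2
      rw [phi_child hτ hc, if_neg h1, if_neg, Finset.sum_eq_single a]
      · rw [if_pos rfl]; field_simp; ring
      · intro b _ hb
        rw [if_neg]; simpa using hb.symm
      · simp
      · intro h
        have := congrArg List.length h
        simp only [List.length_cons] at this
        omega
    push Not at h2
    rw [if_neg h1, Finset.sum_eq_zero fun a _ => if_neg (h2 a)]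
    by_cases h3 : c = t
    · subst h3
      rw [phi_parent hτ h, if_pos rfl]; field_simp; ring
    · rw [phi_far hτ h hc (Ne.symm h1) h2, if_neg h3]
      · ring
      · rintro a ha
        exact h3 (List.cons.inj ha).2.symm
  rw [Lv, map_sum, Finset.sum_congr rfl key, Finset.sum_sub_distrib, Finset.sum_add_distrib,
    Finset.sum_comm, Finset.sum_ite_eq', Finset.sum_ite_eq', if_pos (mem_nodes.2 h),
    if_pos (mem_nodes.2 h.tail)]
  simp only [Finset.sum_ite_eq', mem_nodes, ch]

theorem Lv_T (hτ : Col Γ D τ) {u : V} {t : List V} (h : Nd Γ (u :: t)) (k : ℤ) {x : Om K}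
    {y : List V → K} (hx : x τ = Lv Γ D τ y) :
    R K (strands V) (T (u :: t) ^ k) x τ = Lv Γ D τ
      (y + (D.X (u :: t) ^ k * y (u :: t) + kap D (u :: t) k * (ch Γ y (u :: t) - y t) -
        y (u :: t)) • dl (u :: t)) := by
  have hX := X_ne_zero D (u :: t)
  have e : (τ (lN (u :: t)) : K) * τ (rN (u :: t)) = D.X (u :: t) := by
    rw [(hτ _ h).1, (hτ _ h).2]; field_simp
  have h1 : D.X (u :: t) - 1 ≠ 0 := sub_ne_zero.2 (X_ne_one D _)
  have hg := gam_ne_zero D (u :: t)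
  rw [T, R_twc_zpow (lN_lt_rN h) (rN_lt h) τ (by rw [e]; exact X_ne_one D _), e, hx, phi_Lv hτ h,
    Lv_add, Lv_smul_dl h]
  congr 2
  rw [kap]
  field_simp
  ring

/-- Nodes with the same label are never parent and child, so the powers of their twists act
independently of each other. -/
theorem Lv_list (hτ : Col Γ D τ) {v : V} {l : List (List V)} (hl : ∀ s ∈ l, s ∈ nodesOf Γ v)
    (hn : l.Nodup) (k : ℤ) {x : Om K} {y : List V → K} (hx : x τ = Lv Γ D τ y) :
    R K (strands V) (l.map fun s => T s ^ k).prod x τ = Lv Γ D τ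
      (fun s => if s ∈ l then step Γ D v k y s else y s) := by
  induction l with
  | nil => simpa using hx
  | cons s l ih =>
    have ih := ih (fun c hc => hl c (by simp [hc])) (List.nodup_cons.1 hn).2
    have hsl := (List.nodup_cons.1 hn).1
    obtain ⟨hs, hsv⟩ := mem_nodesOf.1 (hl s (by simp))
    rcases s with _ | ⟨u, t⟩
    · simp at hsv
    obtain rfl : u = v := by simpa using hsv
    rw [List.map_cons, List.prod_cons, map_mul, Equiv.Perm.mul_apply, Lv_T hτ hs k ih]
    have hut := (List.nodup_cons.1 hs.1).1
    have hlab : ∀ c ∈ l, c.head? = some u := fun c hc =>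
      (mem_nodesOf.1 (hl c (by simp [hc]))).2
    have ht : t ∉ l := fun h => head_ne hut (hlab t h)
    have hch : ch Γ (fun s => if s ∈ l then step Γ D u k y s else y s) (u :: t) =
        ch Γ y (u :: t) := by
      refine Finset.sum_congr rfl fun a _ => ?_
      by_cases h1 : Nd Γ (a :: u :: t)
      · rw [if_pos h1, if_pos h1]
        refine if_neg fun h2 => ?_
        have := hlab _ h2
        simp only [List.head?_cons, Option.some.injEq] at this
        subst this
        exact absurd (List.nodup_cons.1 h1.1).1 (by simp)
      · rw [if_neg h1, if_neg h1]
    refine Lv_congr fun c _ => ?_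
    rw [hch]
    simp only [if_neg ht, if_neg hsl]
    by_cases hc : c = u :: t
    · subst hc
      simp [hsl, step_pos Γ D rfl hs]
    · simp [hc]

/-- The image of `v ^ k` acts on the span of the node vectors by `step`. -/
theorem Lv_img (hτ : Col Γ D τ) (v : V) (k : ℤ) {x : Om K} {y : List V → K}
    (hx : x τ = Lv Γ D τ y) :
    R K (strands V) (img Γ v ^ k) x τ = Lv Γ D τ (step Γ D v k y) := by
  rw [img, zpow_prod_T (fun s hs => hs), Lv_list hτ (fun s hs => hs) (Finset.nodup_toList _) k hx]
  refine Lv_congr fun s hs => ?_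
  split_ifs with h
  · rfl
  · rw [step_neg]
    rw [mem_nodesOf] at h
    tauto

theorem Lv_sprod (hτ : Col Γ D τ) {F : Raag Γ →* BraidGroup (strands V)}
    (hF : ∀ v, F (Raag.of Γ v) = img Γ v) (w : List (V × ℤ)) {x : Om K} {y : List V → K}
    (hx : x τ = Lv Γ D τ y) :
    R K (strands V) (F (sprod Γ w)) x τ = Lv Γ D τ (run Γ D w y) := by
  induction w with
  | nil => simpa [sprod, run_nil] using hx
  | cons p w ih =>
    rw [sprod_cons, map_mul, map_mul, Equiv.Perm.mul_apply, map_zpow, hF, run_cons]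
    exact Lv_img hτ p.1 p.2 ih

/-- The strand at the right end of the chord of a node sees only the coordinate at that node. -/
theorem Lv_apply_rN (hτ : Col Γ D τ) {s : List V} (hs : Nd Γ s) (x : List V → K) :
    Lv Γ D τ x (rN s) = x s * (gam D s)⁻¹ * (1 - (D.X s)⁻¹) := by
  rw [Lv, Finset.sum_apply, Finset.sum_eq_single s]
  · simp [Ev, (hτ s hs).1]
  · intro c hc hcs
    obtain ⟨-, h2, -, h4⟩ := pos_ne (mem_nodes.1 hc) hs hcs
    have h3 := (pos_ne (mem_nodes.1 hc) hs hcs).2.2.1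
    simp [Ev, h3, h4]
  · intro h; simp [hs] at h

/-- Chords have disjoint sets of ends, so their colours can be prescribed. -/
theorem exists_col (Γ : SimpleGraph V) (D : VarData (List V) K) : ∃ τ : ℕ → Kˣ, Col Γ D τ ∧
    ∀ i, (τ i : K) = 1 ∨ ∃ s, (τ i : K) = (D.X s)⁻¹ ∨ (τ i : K) = D.X s ^ 2 := by
  classical
  let τ : ℕ → Kˣ := fun i =>
    if h : ∃ s, Nd Γ s ∧ lN s = i then (Units.mk0 _ (X_ne_zero D h.choose))⁻¹
    else if h : ∃ s, Nd Γ s ∧ rN s = i then Units.mk0 _ (X_ne_zero D h.choose) ^ 2 else 1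
  refine ⟨τ, fun s hs => ⟨?_, ?_⟩, fun i => ?_⟩
  · have h : ∃ c, Nd Γ c ∧ lN c = lN s := ⟨s, hs, rfl⟩
    have e : h.choose = s := by
      by_contra hne
      exact (pos_ne hs h.choose_spec.1 (Ne.symm hne)).1 h.choose_spec.2
    simp only [τ, dif_pos h, e, Units.val_inv_eq_inv_val, Units.val_mk0]
  · have h0 : ¬ ∃ c, Nd Γ c ∧ lN c = rN s := by
      rintro ⟨c, hc, h⟩
      by_cases hcs : s = c
      · subst hcs; exact (lN_lt_rN hs).ne h
      · exact (pos_ne hs hc hcs).2.1 h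
    have h : ∃ c, Nd Γ c ∧ rN c = rN s := ⟨s, hs, rfl⟩
    have e : h.choose = s := by
      by_contra hne
      exact (pos_ne hs h.choose_spec.1 (Ne.symm hne)).2.2.2 h.choose_spec.2
    simp only [τ, dif_neg h0, dif_pos h, e, Units.val_pow_eq_pow_val, Units.val_mk0]
  · by_cases h : ∃ s, Nd Γ s ∧ lN s = i
    · exact Or.inr ⟨h.choose, Or.inl (by
        simp only [τ, dif_pos h, Units.val_inv_eq_inv_val, Units.val_mk0])⟩
    by_cases h' : ∃ s, Nd Γ s ∧ rN s = i
    · exact Or.inr ⟨h'.choose, Or.inr (by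
        simp only [τ, dif_neg h, dif_pos h', Units.val_pow_eq_pow_val, Units.val_mk0])⟩
    · exact Or.inl (by simp only [τ, dif_neg h, dif_neg h', Units.val_one])

end Equivariance

end RB

namespace RB

/-! ### Distortion estimates -/

open scoped NNReal

set_option linter.unusedSectionVars false

section Bounds

variable {K : Type} [Field K] (w : Valuation K ℝ≥0)

/-- Colourings whose colours and inverse colours have valuation at most `4`. -/
def Tame (τ : ℕ → Kˣ) : Prop := ∀ i, w (τ i) ≤ 4 ∧ w (↑(τ i)⁻¹ : K) ≤ 4

/-- At tame colourings all coordinates have valuation at most `2 ^ d`. -/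
def Bd (d : ℕ) (x : Om K) : Prop := ∀ τ, Tame w τ → ∀ i, w (x τ i) ≤ 2 ^ d

variable {w}

theorem Tame.sh {τ : ℕ → Kˣ} (h : Tame w τ) (i : ℕ) : Tame w (sh i τ) := fun _ => h _

theorem Tame.one_sub {τ : ℕ → Kˣ} (h : Tame w τ) (i : ℕ) : w (1 - (τ i : K)) ≤ 4 :=
  (Valuation.map_sub _ _ _).trans (max_le (by rw [map_one]; norm_num) (h i).1)

theorem pow_le_add_four (d : ℕ) : (2 : ℝ≥0) ^ d ≤ 2 ^ (d + 4) :=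
  pow_le_pow_right₀ (by norm_num) (by omega)

theorem Bd.bur {d : ℕ} {x : Om K} (h : Bd w d x) (i : ℕ) : Bd w (d + 4) (bur i x) := by
  intro τ hτ j
  have h' := h _ (hτ.sh i)
  have h4 := pow_le_add_four d
  rw [bur_apply, Cb]
  have e : (2 : ℝ≥0) ^ (d + 4) = 16 * 2 ^ d := by rw [pow_add, mul_comm]; norm_num
  have e4 : (4 : ℝ≥0) * 2 ^ d ≤ 2 ^ (d + 4) := by
    rw [e]; exact mul_le_mul_of_nonneg_right (by norm_num) (by positivity)
  split_ifs
  · refine (Valuation.map_add _ _ _).trans (max_le ?_ ((h' _).trans h4))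
    rw [map_mul]
    exact (mul_le_mul' (hτ.one_sub _) (h' _)).trans e4
  · rw [map_mul]
    exact (mul_le_mul' (hτ _).1 (h' _)).trans e4
  · exact (h' _).trans h4

theorem Bd.bur_inv {d : ℕ} {x : Om K} (h : Bd w d x) (i : ℕ) : Bd w (d + 4) ((RB.bur i)⁻¹ x) := by
  intro τ hτ j
  have h' := h _ (hτ.sh i)
  have h4 := pow_le_add_four d
  rw [bur_inv_apply, Db]
  have e : (2 : ℝ≥0) ^ (d + 4) = 16 * 2 ^ d := by rw [pow_add, mul_comm]; norm_num
  have e4 : (4 : ℝ≥0) * 2 ^ d ≤ 2 ^ (d + 4) := by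
    rw [e]; exact mul_le_mul_of_nonneg_right (by norm_num) (by positivity)
  have hD : w (↑(τ (i + 1))⁻¹ * x (RB.sh i τ) (i + 1)) ≤ 4 * 2 ^ d := by
    rw [map_mul]; exact mul_le_mul' (hτ _).2 (h' _)
  split_ifs
  · exact hD.trans e4
  · refine (Valuation.map_sub _ _ _).trans (max_le ((h' _).trans h4) ?_)
    rw [map_mul]
    refine (mul_le_mul' (hτ.one_sub _) hD).trans ?_
    rw [e, ← mul_assoc]
    norm_num
  · exact (h' _).trans h4

/-- Every braid raises the bounds by a bounded factor. -/
theorem exists_cost (w : Valuation K ℝ≥0) (n : ℕ) (β : BraidGroup n) :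
    ∃ C : ℕ, ∀ d x, Bd w d x → Bd w (d + C) (R K n β x) ∧ Bd w (d + C) (R K n β⁻¹ x) := by
  have hβ : β ∈ Subgroup.closure (Set.range (PresentedGroup.of (rels := braidRels n))) := by
    rw [PresentedGroup.closure_range_of]; trivial
  induction hβ using Subgroup.closure_induction with
  | mem g hg =>
    obtain ⟨⟨i, hi⟩, rfl⟩ := hg
    refine ⟨4, fun d x h => ?_⟩
    have := R_sig (K := K) hi
    rw [sig_of_lt hi] at this
    rw [map_inv, this]
    exact ⟨h.bur i, h.bur_inv i⟩
  | one => exact ⟨0, fun d x h => by simpa using h⟩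
  | mul a b _ _ ha hb =>
    obtain ⟨A, hA⟩ := ha
    obtain ⟨B, hB⟩ := hb
    refine ⟨A + B, fun d x h => ⟨?_, ?_⟩⟩
    · rw [map_mul, Equiv.Perm.mul_apply, add_comm A, ← add_assoc]
      exact (hA _ _ (hB _ _ h).1).1
    · rw [mul_inv_rev, map_mul, Equiv.Perm.mul_apply, ← add_assoc]
      exact (hB _ _ (hA _ _ h).2).2
  | inv a _ ha =>
    obtain ⟨A, hA⟩ := ha
    exact ⟨A, fun d x h => by rw [inv_inv]; exact (hA d x h).symm⟩

/-- Over a finitely generated subgroup the exponent grows at most linearly in word length. -/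
theorem exists_rate (w : Valuation K ℝ≥0) {n : ℕ} {P : Subgroup (BraidGroup n)} (S : Finset P)
    (hS : Subgroup.closure (S : Set P) = ⊤) :
    ∃ C : ℕ, ∀ (g : P) d x, Bd w d x → Bd w (d + C * wordLength (S : Set P) g) (R K n g x) := by
  choose C hC using fun g : P => exists_cost w n g
  refine ⟨∑ s ∈ S, C s, fun g d x h => ?_⟩
  obtain ⟨l, hl, rfl, hlen⟩ := wl_exists_list hS g
  rw [← hlen]
  clear hlen
  have mono : ∀ {d d' : ℕ} {y : Om K}, d ≤ d' → Bd w d y → Bd w d' y := fun hd h τ hτ i =>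
    (h τ hτ i).trans (pow_le_pow_right₀ (by norm_num) hd)
  induction l with
  | nil => simpa using h
  | cons s l ih =>
    have ih := ih fun y hy => hl y (by simp [hy])
    rw [List.prod_cons, Subgroup.coe_mul, map_mul, Equiv.Perm.mul_apply, List.length_cons, mul_add,
      mul_one, ← add_assoc]
    rcases hl s (by simp) with hs | hs
    · exact mono (by
        have := Finset.single_le_sum (f := C) (fun _ _ => Nat.zero_le _) (Finset.mem_coe.1 hs)
        omega) (hC s _ _ ih).1
    · have := (hC s⁻¹ _ _ ih).2
      rw [Subgroup.coe_inv, inv_inv] at this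
      exact mono (by
        have := Finset.single_le_sum (f := C) (fun _ _ => Nat.zero_le _) (Finset.mem_coe.1 hs)
        omega) this

end Bounds

section Main

variable {V : Type} [Fintype V] [DecidableEq V] {Γ : SimpleGraph V} {K : Type} [Field K]
  {D : VarData (List V) K} {τ : ℕ → Kˣ}

theorem tame_of_col (hτ : ∀ i, (τ i : K) = 1 ∨ ∃ s, (τ i : K) = (D.X s)⁻¹ ∨ (τ i : K) = D.X s ^ 2)
    (t : List V) : Tame (D.w t) τ := by
  intro i
  have hX : ∀ s, D.w t (D.X s) = 1 ∨ D.w t (D.X s) = 2 := fun s => by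
    by_cases h : s = t
    · subst h; exact Or.inr (D.w_X s)
    · exact Or.inl (D.w_N t _ (D.X_mem s t h) (X_ne_zero D s))
  rw [Units.val_inv_eq_inv_val, map_inv₀]
  have h1 : (1 : ℝ≥0) ≤ 4 := by norm_num
  have h2 : (2 : ℝ≥0) ≤ 4 := by norm_num
  have h3 : (2 : ℝ≥0)⁻¹ ≤ 4 := (inv_le_one_of_one_le₀ (by norm_num)).trans h1
  have h5 : ((2 : ℝ≥0) ^ 2)⁻¹ ≤ 4 := (inv_le_one_of_one_le₀ (by norm_num)).trans h1
  have h4 : (2 : ℝ≥0) ^ 2 ≤ 4 := by norm_num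
  rcases hτ i with h | ⟨s, h | h⟩
  · simp [h, h1]
  · rcases hX s with e | e <;> simp [h, e, h1, h2, h3]
  · rcases hX s with e | e <;> simp [h, e, h1, h4, h5]

/-- The total weight of the syllables with label `v` is at most linear in the word length of the
image: the image of a reduced word takes a vector with bounded coordinates to one whose coordinate at
the strand `rN [v]` has valuation `2 ^ vs v w / 4`. -/
theorem run_coord_le {π : BraidGroup (strands V) →* Equiv.Perm (Fin (strands V))}
    (D : VarData (List V) K) (f : Raag Γ →* π.ker)
    (hf : ∀ v, (f (Raag.of Γ v) : BraidGroup (strands V)) = img Γ v)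
    (S : Finset π.ker) (hS : Subgroup.closure (S : Set π.ker) = ⊤) (v : V) :
    ∃ C : ℕ, ∀ w : List (V × ℤ), Red Γ w →
      vs v w ≤ C * wordLength (S : Set π.ker) (f (sprod Γ w)) + 2 := by
  obtain ⟨τ, hτ, hτ'⟩ := exists_col Γ D
  have htame := tame_of_col hτ' [v]
  have hroot : Nd Γ ([] : List V) := ⟨by simp, by simp⟩
  have hnv : Nd Γ [v] := ⟨by simp, by simp⟩
  have hne : ([] : List V) ≠ [v] := by simp
  let x0 : Om K := fun _ => Lv Γ D τ (dl [])
  have hx0 : Bd (D.w [v]) 0 x0 := by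
    intro _ _ i
    rw [pow_zero]
    apply w_le_one D
    have e := Lv_smul_dl (D := D) (τ := τ) hroot 1
    rw [one_smul, one_mul] at e
    simp only [x0, e, Pi.smul_apply, smul_eq_mul]
    have hX := D.X_mem [] [v] hne
    refine mul_mem (inv_mem (gam_mem D hne)) ?_
    simp only [Ev, (hτ _ hroot).1, (hτ _ hroot).2]
    split_ifs
    · exact sub_mem (one_mem _) (inv_mem hX)
    · exact neg_mem (sub_mem (one_mem _) (pow_mem hX 2))
    · exact zero_mem _
  obtain ⟨C, hC⟩ := exists_rate (D.w [v]) S hS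
  refine ⟨C, fun w hw => ?_⟩
  by_cases hv : ∃ p ∈ w, p.1 = v
  · have h1 := hC (f (sprod Γ w)) 0 x0 hx0 τ htame (rN [v])
    have h2 := Lv_sprod hτ (F := π.ker.subtype.comp f) hf w (x := x0) rfl
    simp only [MonoidHom.comp_apply, Subgroup.coe_subtype] at h2
    have h3 := w_zpow_sub_one D [v] (k := -1) (by norm_num)
    rw [Valuation.map_sub_swap, zpow_neg_one, show (-1 : ℤ).toNat = 0 from rfl, pow_zero] at h3
    rw [h2, Lv_apply_rN hτ hnv, map_mul, map_mul, map_inv₀, w_gam, growth_root Γ D hw hv, h3,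
      mul_one, ← div_eq_mul_inv, div_le_iff₀ (by norm_num), show (4 : ℝ≥0) = 2 ^ 2 by norm_num,
      ← pow_add, zero_add] at h1
    exact (pow_le_pow_iff_right₀ (by norm_num)).1 h1
  · push Not at hv
    rw [vs_of_notMem hv]; exact Nat.zero_le _

theorem hom_injective {π : BraidGroup (strands V) →* Equiv.Perm (Fin (strands V))}
    (D : VarData (List V) K) (f : Raag Γ →* π.ker)
    (hf : ∀ v, (f (Raag.of Γ v) : BraidGroup (strands V)) = img Γ v) : Function.Injective f := by
  rw [injective_iff_map_eq_one]
  intro g hg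
  obtain ⟨w, hw, rfl⟩ := exists_red Γ g
  rcases w with _ | ⟨⟨v, k⟩, w⟩
  · simp [sprod]
  exfalso
  obtain ⟨τ, hτ, -⟩ := exists_col Γ D
  have hnv : Nd Γ [v] := ⟨by simp, by simp⟩
  have h2 := Lv_sprod hτ (F := π.ker.subtype.comp f) hf ((v, k) :: w)
    (x := fun _ => Lv Γ D τ (dl [])) rfl
  simp only [MonoidHom.comp_apply, hg, map_one, Equiv.Perm.one_apply] at h2
  have h3 := congrFun h2 (rN [v])
  rw [Lv_apply_rN hτ hnv, Lv_apply_rN hτ hnv] at h3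
  have h4 : (1 - (D.X [v])⁻¹) ≠ 0 := sub_ne_zero.2 fun h =>
    X_ne_one D [v] (by rw [← inv_inv (D.X [v]), ← h, inv_one])
  have h5 := mul_right_cancel₀ (inv_ne_zero (gam_ne_zero D [v])) (mul_right_cancel₀ h4 h3)
  have h6 := growth_root Γ D hw (v := v) ⟨(v, k), by simp, rfl⟩
  rw [← h5] at h6
  have h7 : (2 : ℝ≥0) ^ vs v ((v, k) :: w) ≠ 0 := pow_ne_zero _ two_ne_zero
  exact h7 (by rw [← h6]; simp)

theorem sum_natAbs_le (w : List (V × ℤ)) :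
    (w.map fun p => p.2.natAbs).sum ≤ ∑ v, (vs v w + vs v (sinv w)) := by
  have e : ∀ v, vs v (sinv w) = (w.map fun p => if p.1 = v then (-p.2).toNat + 1 else 0).sum := by
    intro v
    simp only [vs, sinv, List.map_reverse, List.sum_reverse, List.map_map, Function.comp_def]
  simp only [e]
  induction w with
  | nil => simp
  | cons p w ih =>
    have hp : ∑ v, ((if p.1 = v then p.2.toNat + 1 else 0) +
        (if p.1 = v then (-p.2).toNat + 1 else 0)) = p.2.toNat + 1 + ((-p.2).toNat + 1) := by
      rw [Finset.sum_add_distrib, Finset.sum_ite_eq, Finset.sum_ite_eq]; simp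
    simp only [vs, List.map_cons, List.sum_cons] at ih ⊢
    have := ih fun v => by
      simp only [sinv, List.map_reverse, List.sum_reverse, List.map_map, Function.comp_def]
    rw [Finset.sum_congr rfl fun v _ => add_add_add_comm _ _ _ _, Finset.sum_add_distrib, hp]
    omega

theorem hom_qi {π : BraidGroup (strands V) →* Equiv.Perm (Fin (strands V))}
    (D : VarData (List V) K) (f : Raag Γ →* π.ker)
    (hf : ∀ v, (f (Raag.of Γ v) : BraidGroup (strands V)) = img Γ v)
    (S : Finset π.ker) (hS : Subgroup.closure (S : Set π.ker) = ⊤) :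
    IsQIEmbedding f (raagDist Γ) (wordDist (S : Set π.ker)) := by
  choose C hC using run_coord_le D f hf S hS
  set A := ∑ v, 2 * C v
  set M := 4 * Fintype.card V
  have lower : ∀ g, raagNorm Γ g ≤ A * wordLength (S : Set π.ker) (f g) + M := by
    intro g
    obtain ⟨w, hw, rfl⟩ := exists_red Γ g
    refine (raagNorm_sprod_le Γ w).trans ((sum_natAbs_le w).trans ?_)
    have h : ∀ v ∈ Finset.univ, vs v w + vs v (sinv w) ≤
        2 * C v * wordLength (S : Set π.ker) (f (sprod Γ w)) + 4 := by
      intro v _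
      have h1 := hC v w hw
      have h2 := hC v (sinv w) hw.sinv
      rw [sprod_sinv, map_inv, wl_inv hS] at h2
      rw [mul_assoc]
      omega
    refine (Finset.sum_le_sum h).trans_eq ?_
    rw [Finset.sum_add_distrib, ← Finset.sum_mul, Finset.sum_const, Finset.card_univ, smul_eq_mul,
      mul_comm _ 4]
  set B := ∑ v, wordLength (S : Set π.ker) (f (Raag.of Γ v))
  have upper : ∀ g, wordLength (S : Set π.ker) (f g) ≤ B * raagNorm Γ g := by
    refine wl_hom_le (raag_closure Γ) hS f B ?_
    rintro _ ⟨v, rfl⟩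
    exact Finset.single_le_sum (f := fun v => wordLength (S : Set π.ker) (f (Raag.of Γ v)))
      (fun _ _ => Nat.zero_le _) (Finset.mem_univ v)
  refine ⟨hom_injective D f hf, (A : ℝ) + M + B + 1, ?_, fun x y => ?_⟩
  · have : (0 : ℝ) ≤ (A : ℝ) + M + B := by positivity
    linarith
  have hl : (raagNorm Γ (y * x⁻¹) : ℝ) ≤
      A * wordLength (S : Set π.ker) (f (y * x⁻¹)) + M := mod_cast lower (y * x⁻¹)
  have hu : (wordLength (S : Set π.ker) (f (y * x⁻¹)) : ℝ) ≤ B * raagNorm Γ (y * x⁻¹) :=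
    mod_cast upper (y * x⁻¹)
  have e1 : raagDist Γ x y = raagNorm Γ (y * x⁻¹) := rfl
  have e2 : wordDist (S : Set π.ker) (f x) (f y) =
      wordLength (S : Set π.ker) (f (y * x⁻¹)) := by rw [wordDist, map_mul, map_inv]
  rw [e1, e2]
  have ha0 : (0 : ℝ) ≤ raagNorm Γ (y * x⁻¹) := Nat.cast_nonneg _
  generalize (raagNorm Γ (y * x⁻¹) : ℝ) = a at *
  have hb0 : (0 : ℝ) ≤ wordLength (S : Set π.ker) (f (y * x⁻¹)) := Nat.cast_nonneg _
  generalize (wordLength (S : Set π.ker) (f (y * x⁻¹)) : ℝ) = b at *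
  have hA : (0 : ℝ) ≤ A := Nat.cast_nonneg _
  have hM : (0 : ℝ) ≤ M := Nat.cast_nonneg _
  have hB : (0 : ℝ) ≤ B := Nat.cast_nonneg _
  generalize (A : ℝ) = A' at *
  generalize (M : ℝ) = M' at *
  generalize (B : ℝ) = B' at *
  constructor
  · rw [sub_le_iff_le_add, div_le_iff₀ (by linarith)]
    nlinarith [mul_nonneg hM hb0, mul_nonneg hB hb0, mul_nonneg hA hM, mul_nonneg hA hB,
      mul_nonneg hM hB, mul_nonneg hA hA, mul_nonneg hM hM, mul_nonneg hB hB]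
  · nlinarith [mul_nonneg hA ha0, mul_nonneg hM ha0]

end Main

end RB

/-- For every finite simple graph `Γ` with `m ≥ 2` vertices there is an
`n ≤ 2^(2^(m²))` such that `G(Γ)` admits a quasi-isometric group embedding into the pure braid
group `P_n` — the kernel of the projection `π : B_n → S_n` sending `σᵢ` to the transposition
`(i, i+1)` — where `G(Γ)` carries the word metric of the vertex generating set and `P_n` the
word metric of some finite generating set.  (The projection `π` exists and is unique; we assert
its existence and state the embedding for any such `π`.) -/
theorem raag_qie_into_pure_braid_group {V : Type} [Fintype V] [DecidableEq V]
    (Γ : SimpleGraph V) (hm : 2 ≤ Fintype.card V) :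
    ∃ n : ℕ, n ≤ 2 ^ 2 ^ (Fintype.card V) ^ 2 ∧
      (∃ π : BraidGroup n →* Equiv.Perm (Fin n), ∀ i : Fin (n - 1),
        π (braidGen n i) =
          Equiv.swap ⟨(i : ℕ), by have := i.isLt; omega⟩
            ⟨(i : ℕ) + 1, by have := i.isLt; omega⟩) ∧
      ∀ π : BraidGroup n →* Equiv.Perm (Fin n),
        (∀ i : Fin (n - 1),
          π (braidGen n i) =
            Equiv.swap ⟨(i : ℕ), by have := i.isLt; omega⟩
              ⟨(i : ℕ) + 1, by have := i.isLt; omega⟩) →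
        ∃ (S : Finset π.ker) (f : Raag Γ →* π.ker),
          Subgroup.closure (S : Set π.ker) = ⊤ ∧
          IsQIEmbedding f (raagDist Γ) (wordDist (S : Set π.ker)) := by
  obtain ⟨K, _, ⟨D⟩⟩ := RB.exists_varData (List V)
  refine ⟨RB.strands V, RB.strands_le hm, RB.exists_pi _, fun π hπ => ?_⟩
  obtain ⟨S, hS⟩ := RB.ker_fg π
  obtain ⟨f, hf⟩ := RB.exists_hom (Γ := Γ) hπ
  exact ⟨S, f, hS, RB.hom_qi D f hf S hS⟩
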